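/- arXiv:1306.4917 — 9 statements merged into one kernel-verified Lean document; each statement's English description precedes it below -/
import Mathlib

section
/- Consider a network with a single transhipment node and a job set J over a time horizon of T ≥ 1 periods. Every schedule has throughput at most min{C2⁻ + (T−1)·C1⁻, C2⁺ + (T−1)·C1⁺}. -/
/-!
Both `{s}` and `{s, v}` are cuts, so the value of a flow is the total flow on the arcs `s → v`, and
by conservation at `v` also the total flow on the arcs `v → t`. Fix one of these two cuts `S`. In
period `i` the flow across `S` is at most the total capacity of the arcs of `S` that are not shut
down (`throughput_le_of_cut`). Summing over the `T` periods, an arc outside `J` contributes its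
capacity `T` times, and an arc of `J`, shut down in exactly one period, contributes `T - 1` times.
-/

open Finset

/-- Feasibility of a flow `x` in the network given by `src`, `tgt`, source `s`, sink `t`,
capacities `u`, with the arcs in `K` removed (shut down). -/
def IsFlow {V A : Type*} [Fintype V] [Fintype A] [DecidableEq V]
    (src tgt : A → V) (s t : V) (u : A → ℝ) (K : Set A) (x : A → ℝ) : Prop :=
  (∀ a, 0 ≤ x a ∧ x a ≤ u a) ∧ (∀ a ∈ K, x a = 0) ∧
  ∀ v, v ≠ s → v ≠ t →
    ∑ a ∈ univ.filter (fun a => tgt a = v), x a =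
      ∑ a ∈ univ.filter (fun a => src a = v), x a

/-- The value of a flow `x`: net outflow of the source `s`. -/
def flowValue {V A : Type*} [Fintype A] [DecidableEq V]
    (src tgt : A → V) (s : V) (x : A → ℝ) : ℝ :=
  ∑ a ∈ univ.filter (fun a => src a = s), x a -
    ∑ a ∈ univ.filter (fun a => tgt a = s), x a

/-- The set of values of feasible flows when the arcs in `K` are removed.
`F K` (the max flow with `K` removed) is the greatest element of this set. -/
def flowValues {V A : Type*} [Fintype V] [Fintype A] [DecidableEq V]
    (src tgt : A → V) (s t : V) (u : A → ℝ) (K : Set A) : Set ℝ :=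
  {z | ∃ x, IsFlow src tgt s t u K x ∧ z = flowValue src tgt s x}

/-- The throughput of the schedule `σ` over the time horizon `{1,…,T}`:
in time period `i` the arcs of `J` scheduled at `i` are shut down. -/
def throughput {A : Type*} (F : Set A → ℝ) (J : Set A) (T : ℕ) (σ : A → ℕ) : ℝ :=
  ∑ i ∈ Finset.Icc 1 T, F {a | a ∈ J ∧ σ a = i}

/-- The bound given by a single cut `S`, where `hcut` says that the maximum flow with `K` removed is
the total flow across `S` of some assignment that respects the capacities and vanishes on `K`. -/
lemma throughput_le_of_cut {A : Type*} [DecidableEq A] (u : A → ℝ) (S J : Finset A) (T : ℕ)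
    (F : Set A → ℝ)
    (hcut : ∀ K : Set A, ∃ x : A → ℝ,
      (∀ a, x a ≤ u a) ∧ (∀ a ∈ K, x a = 0) ∧ F K = ∑ a ∈ S, x a)
    (σ : A → ℕ) (hσ : ∀ a ∈ J, σ a ∈ Finset.Icc 1 T) :
    throughput F (↑J) T σ ≤
      (∑ a ∈ S.filter (fun a => a ∉ J), u a) + ((T : ℝ) - 1) * ∑ a ∈ S, u a := by
  have hperiod : ∀ i, F {a | a ∈ (J : Set A) ∧ σ a = i} ≤
      ∑ a ∈ S, (u a - if a ∈ J ∧ σ a = i then u a else 0) := by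
    intro i
    obtain ⟨x, hxu, hxK, hx⟩ := hcut {a | a ∈ (J : Set A) ∧ σ a = i}
    rw [hx]
    refine Finset.sum_le_sum fun a _ => ?_
    split_ifs with h
    · rw [hxK a (by simpa using h)]
      simp
    · simpa using hxu a
  calc throughput F (↑J) T σ
      ≤ ∑ i ∈ Finset.Icc 1 T, ∑ a ∈ S, (u a - if a ∈ J ∧ σ a = i then u a else 0) :=
        Finset.sum_le_sum fun i _ => hperiod i
    _ = ∑ a ∈ S, ((if a ∉ J then u a else 0) + ((T : ℝ) - 1) * u a) := by
        rw [Finset.sum_comm]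
        refine Finset.sum_congr rfl fun a _ => ?_
        by_cases ha : a ∈ J
        · have := hσ a ha
          simp only [Finset.sum_sub_distrib, ha, true_and, Finset.sum_ite_eq, this]
          simp
          ring
        · simp [ha]
          ring
    _ = _ := by
        rw [Finset.sum_add_distrib, Finset.sum_filter, Finset.mul_sum]

/-- For a single-transhipment-node network, every schedule has throughput at most
`min{C2⁻ + (T−1)·C1⁻, C2⁺ + (T−1)·C1⁺}`. -/
theorem throughput_upper_bound_singleNode
    {V A : Type*} [Fintype V] [Fintype A] [DecidableEq V] [DecidableEq A]
    (src tgt : A → V) (s t v : V) (u : A → ℝ)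
    (hst : s ≠ t) (hvs : v ≠ s) (hvt : v ≠ t)
    (hV : ∀ w : V, w = s ∨ w = v ∨ w = t)
    (harc : ∀ a, (src a = s ∧ tgt a = v) ∨ (src a = v ∧ tgt a = t))
    (hu : ∀ a, 0 ≤ u a)
    (J : Finset A) (T : ℕ) (hT : 1 ≤ T)
    (F : Set A → ℝ)
    (hF : ∀ K : Set A, IsGreatest (flowValues src tgt s t u K) (F K))
    (σ : A → ℕ) (hσ : ∀ a ∈ J, σ a ∈ Finset.Icc 1 T) :
    throughput F (↑J) T σ ≤
      min ((∑ a ∈ univ.filter (fun a => src a = s ∧ tgt a = v ∧ a ∉ J), u a) +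
            ((T : ℝ) - 1) * ∑ a ∈ univ.filter (fun a => src a = s ∧ tgt a = v), u a)
          ((∑ a ∈ univ.filter (fun a => src a = v ∧ tgt a = t ∧ a ∉ J), u a) +
            ((T : ℝ) - 1) * ∑ a ∈ univ.filter (fun a => src a = v ∧ tgt a = t), u a) := by
  -- No arc enters `s`, so the value is the flow on the arcs `s → v`.
  have hval : ∀ x : A → ℝ, flowValue src tgt s x =
      ∑ a ∈ univ.filter (fun a => src a = s ∧ tgt a = v), x a := by
    intro x
    have hin : univ.filter (fun a => tgt a = s) = ∅ := by
      ext a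
      have := harc a
      grind
    have hout : univ.filter (fun a => src a = s) =
        univ.filter (fun a => src a = s ∧ tgt a = v) := by
      ext a
      have := harc a
      grind
    simp [flowValue, hin, hout]
  have htgt : univ.filter (fun a => tgt a = v) =
      univ.filter (fun a => src a = s ∧ tgt a = v) := by
    ext a
    have := harc a
    grind
  have hsrc : univ.filter (fun a => src a = v) =
      univ.filter (fun a => src a = v ∧ tgt a = t) := by
    ext a
    have := harc a
    grind
  refine le_min ?_ ?_
  · have h := throughput_le_of_cut u (univ.filter (fun a => src a = s ∧ tgt a = v)) J T F
      (fun K => by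
        obtain ⟨x, hx, hFx⟩ := (hF K).1
        exact ⟨x, fun a => (hx.1 a).2, hx.2.1, hFx.trans (hval x)⟩) σ hσ
    simpa only [Finset.filter_filter, and_assoc] using h
  · have h := throughput_le_of_cut u (univ.filter (fun a => src a = v ∧ tgt a = t)) J T F
      (fun K => by
        obtain ⟨x, hx, hFx⟩ := (hF K).1
        have hcons := hx.2.2 v hvs hvt
        rw [htgt, hsrc] at hcons
        exact ⟨x, fun a => (hx.1 a).2, hx.2.1, (hFx.trans (hval x)).trans hcons⟩) σ hσ
    simpa only [Finset.filter_filter, and_assoc] using h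
end

section
/- Consider a network with a single transhipment node and a job set J over a time horizon of T ≥ 1 periods. If (i) C1⁻ ≤ C1⁺ and C2⁻ ≤ C2⁺, or (ii) C1⁺ ≤ C1⁻ and C2⁺ ≤ C2⁻, then it is optimal to schedule all jobs at the same time: the maximum throughput over all schedules equals min{C2⁻, C2⁺} + (T−1)·min{C1⁻, C1⁺}, and this is attained by assigning every job to period 1. -/
/-!
With a single transhipment node, the maximum flow after removing the arcs in `K` is the smaller
of the two remaining total capacities, on the entering side `s → v` and on the leaving side
`v → t` (`maxFlow_singleNode`): both sides bound every flow, and scaling the capacities of each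
side so that their total becomes that minimum gives a flow attaining it.

Hence the throughput of any schedule is at most the sum over time of the remaining capacity of
either fixed side. As every job is shut down in exactly one period, that sum does not depend on
the schedule: it is `C2 + (T - 1) * C1` for the chosen side (`sum_remaining_capacity`). Under the
hypothesis one side attains both minima in the claimed value, so choosing this side gives the
upper bound. Scheduling everything in period 1 attains it by the maximum flow formula.
-/

open Finset

/-- Maximum flow formula in a single-transhipment-node network. -/
theorem maxFlow_singleNode {V A : Type*} [Fintype V] [Fintype A] [DecidableEq V]
    (src tgt : A → V) (s t v : V) (u : A → ℝ)
    (hst : s ≠ t) (hvs : v ≠ s) (hvt : v ≠ t)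
    (hV : ∀ w : V, w = s ∨ w = v ∨ w = t)
    (harc : ∀ a, (src a = s ∧ tgt a = v) ∨ (src a = v ∧ tgt a = t))
    (hu : ∀ a, 0 ≤ u a) (K : Set A) [DecidablePred (· ∈ K)] (f : ℝ)
    (hf : IsGreatest (flowValues src tgt s t u K) f) :
    f = min (∑ a ∈ univ.filter (fun a => src a = s ∧ tgt a = v), if a ∈ K then 0 else u a)
      (∑ a ∈ univ.filter (fun a => src a = v ∧ tgt a = t), if a ∈ K then 0 else u a) := by
  have hs : univ.filter (fun a => src a = s) = univ.filter (fun a => src a = s ∧ tgt a = v) := by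
    ext a; have := harc a; simp only [mem_filter, mem_univ, true_and]; grind
  have hts : univ.filter (fun a => tgt a = s) = ∅ := by
    ext a; have := harc a; simp only [mem_filter, mem_univ, true_and, notMem_empty]; grind
  have htv : univ.filter (fun a => tgt a = v) = univ.filter (fun a => src a = s ∧ tgt a = v) := by
    ext a; have := harc a; simp only [mem_filter, mem_univ, true_and]; grind
  have hsv : univ.filter (fun a => src a = v) = univ.filter (fun a => src a = v ∧ tgt a = t) := by
    ext a; have := harc a; simp only [mem_filter, mem_univ, true_and]; grind
  set P := univ.filter (fun a => src a = s ∧ tgt a = v) with hP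
  set Q := univ.filter (fun a => src a = v ∧ tgt a = t) with hQ
  set w : A → ℝ := fun a => if a ∈ K then 0 else u a with hw
  have hw0 : ∀ a, 0 ≤ w a := fun a => by simp only [hw]; split_ifs <;> simp [hu]
  have hwu : ∀ a, w a ≤ u a := fun a => by simp only [hw]; split_ifs <;> simp [hu]
  have hp0 : 0 ≤ ∑ a ∈ P, w a := sum_nonneg fun a _ => hw0 a
  have hq0 : 0 ≤ ∑ a ∈ Q, w a := sum_nonneg fun a _ => hw0 a
  change f = min (∑ a ∈ P, w a) (∑ a ∈ Q, w a)
  apply le_antisymm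
  · obtain ⟨x, ⟨hx, hxK, hcons⟩, rfl⟩ := hf.1
    have hxw : ∀ a, x a ≤ w a := fun a => by
      simp only [hw]; split_ifs with h
      · exact (hxK a h).le
      · exact (hx a).2
    have hc := hcons v hvs hvt
    rw [htv, hsv] at hc
    simp only [flowValue, hts, hs, sum_empty, sub_zero]
    exact le_min (sum_le_sum fun a _ => hxw a) (hc.le.trans (sum_le_sum fun a _ => hxw a))
  · set m := min (∑ a ∈ P, w a) (∑ a ∈ Q, w a) with hm
    have hm0 : 0 ≤ m := le_min hp0 hq0
    have hmp : m ≤ ∑ a ∈ P, w a := min_le_left _ _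
    have hmq : m ≤ ∑ a ∈ Q, w a := min_le_right _ _
    -- The scaling factor `m / C` of a side; for `C = 0` the junk value `0` is correct since `m = 0`.
    have hscale : ∀ C : ℝ, m ≤ C → C * (m / C) = m := fun C h => by
      rcases eq_or_ne C 0 with h0 | h0
      · subst h0; simp [le_antisymm h hm0]
      · field_simp
    have hfac : ∀ C : ℝ, m ≤ C → 0 ≤ m / C ∧ m / C ≤ 1 := fun C h =>
      ⟨div_nonneg hm0 (hm0.trans h), div_le_one_of_le₀ h (hm0.trans h)⟩
    let x : A → ℝ := fun a =>
      w a * (if src a = s then m / ∑ a ∈ P, w a else m / ∑ a ∈ Q, w a)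
    have hxP : ∑ a ∈ P, x a = m := by
      rw [← hscale _ hmp, sum_mul]
      refine sum_congr rfl fun a ha => ?_
      have : src a = s := (mem_filter.mp ha).2.1
      simp [x, this]
    have hxQ : ∑ a ∈ Q, x a = m := by
      rw [← hscale _ hmq, sum_mul]
      refine sum_congr rfl fun a ha => ?_
      have : src a ≠ s := (mem_filter.mp ha).2.1.trans_ne hvs
      simp [x, this]
    refine hf.2 ⟨x, ⟨fun a => ?_, fun a ha => by simp [x, hw, ha], fun y hys hyt => ?_⟩, ?_⟩
    · have h : 0 ≤ (if src a = s then m / ∑ a ∈ P, w a else m / ∑ a ∈ Q, w a) ∧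
          (if src a = s then m / ∑ a ∈ P, w a else m / ∑ a ∈ Q, w a) ≤ 1 := by
        split_ifs
        · exact hfac _ hmp
        · exact hfac _ hmq
      exact ⟨mul_nonneg (hw0 a) h.1, (mul_le_of_le_one_right (hw0 a) h.2).trans (hwu a)⟩
    · obtain rfl : y = v := ((hV y).resolve_left hys).resolve_right hyt
      rw [htv, hsv, hxP, hxQ]
    · simp only [flowValue, hts, hs, sum_empty, sub_zero, hxP]

/-- Summed over all periods, the remaining capacity of a set `P` of arcs is the same for every
schedule, as each job is shut down exactly once. -/
theorem sum_remaining_capacity {A : Type*} [DecidableEq A] (P J : Finset A) (u : A → ℝ)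
    (T : ℕ) (σ : A → ℕ) (hσ : ∀ a ∈ J, σ a ∈ Finset.Icc 1 T) :
    ∑ i ∈ Finset.Icc 1 T, ∑ a ∈ P, (if a ∈ J ∧ σ a = i then 0 else u a) =
      ∑ a ∈ P, (if a ∈ J then 0 else u a) + ((T : ℝ) - 1) * ∑ a ∈ P, u a := by
  rw [sum_comm, mul_sum, ← sum_add_distrib]
  refine sum_congr rfl fun a _ => ?_
  by_cases ha : a ∈ J
  · have h : ∀ i, (if a ∈ J ∧ σ a = i then 0 else u a) = u a - if σ a = i then u a else 0 := by
      intro i; simp only [ha, true_and]; split_ifs <;> simp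
    rw [sum_congr rfl fun i _ => h i, sum_sub_distrib, sum_ite_eq, if_pos (hσ a ha), if_pos ha]
    simp
    ring
  · simp [ha]
    ring

/-- Sufficient optimality condition for single-transhipment-node networks: if
(i) `C1⁻ ≤ C1⁺` and `C2⁻ ≤ C2⁺`, or (ii) `C1⁺ ≤ C1⁻` and `C2⁺ ≤ C2⁻`, then it is optimal
to schedule all jobs at the same time: the maximum throughput over all schedules equals
`min{C2⁻, C2⁺} + (T−1)·min{C1⁻, C1⁺}`, attained by assigning every job to period 1. -/
theorem allJobsAtTimeOne_optimal_singleNode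
    {V A : Type*} [Fintype V] [Fintype A] [DecidableEq V] [DecidableEq A]
    (src tgt : A → V) (s t v : V) (u : A → ℝ)
    (hst : s ≠ t) (hvs : v ≠ s) (hvt : v ≠ t)
    (hV : ∀ w : V, w = s ∨ w = v ∨ w = t)
    (harc : ∀ a, (src a = s ∧ tgt a = v) ∨ (src a = v ∧ tgt a = t))
    (hu : ∀ a, 0 ≤ u a)
    (J : Finset A) (T : ℕ) (hT : 1 ≤ T)
    (F : Set A → ℝ)
    (hF : ∀ K : Set A, IsGreatest (flowValues src tgt s t u K) (F K))
    (hcond :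
      ((∑ a ∈ univ.filter (fun a => src a = s ∧ tgt a = v), u a) ≤
          (∑ a ∈ univ.filter (fun a => src a = v ∧ tgt a = t), u a) ∧
        (∑ a ∈ univ.filter (fun a => src a = s ∧ tgt a = v ∧ a ∉ J), u a) ≤
          (∑ a ∈ univ.filter (fun a => src a = v ∧ tgt a = t ∧ a ∉ J), u a)) ∨
      ((∑ a ∈ univ.filter (fun a => src a = v ∧ tgt a = t), u a) ≤
          (∑ a ∈ univ.filter (fun a => src a = s ∧ tgt a = v), u a) ∧
        (∑ a ∈ univ.filter (fun a => src a = v ∧ tgt a = t ∧ a ∉ J), u a) ≤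
          (∑ a ∈ univ.filter (fun a => src a = s ∧ tgt a = v ∧ a ∉ J), u a))) :
    IsGreatest
      {z | ∃ σ : A → ℕ, (∀ a ∈ J, σ a ∈ Finset.Icc 1 T) ∧ z = throughput F (↑J) T σ}
      (min (∑ a ∈ univ.filter (fun a => src a = s ∧ tgt a = v ∧ a ∉ J), u a)
          (∑ a ∈ univ.filter (fun a => src a = v ∧ tgt a = t ∧ a ∉ J), u a) +
        ((T : ℝ) - 1) *
          min (∑ a ∈ univ.filter (fun a => src a = s ∧ tgt a = v), u a)
              (∑ a ∈ univ.filter (fun a => src a = v ∧ tgt a = t), u a)) ∧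
    throughput F (↑J) T (fun _ => 1) =
      min (∑ a ∈ univ.filter (fun a => src a = s ∧ tgt a = v ∧ a ∉ J), u a)
          (∑ a ∈ univ.filter (fun a => src a = v ∧ tgt a = t ∧ a ∉ J), u a) +
        ((T : ℝ) - 1) *
          min (∑ a ∈ univ.filter (fun a => src a = s ∧ tgt a = v), u a)
              (∑ a ∈ univ.filter (fun a => src a = v ∧ tgt a = t), u a) := by
  classical
  have hP : ∑ a ∈ univ.filter (fun a => src a = s ∧ tgt a = v ∧ a ∉ J), u a =
      ∑ a ∈ univ.filter (fun a => src a = s ∧ tgt a = v), if a ∈ J then 0 else u a := by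
    simp only [sum_filter]
    exact sum_congr rfl fun a _ => by grind
  have hQ : ∑ a ∈ univ.filter (fun a => src a = v ∧ tgt a = t ∧ a ∉ J), u a =
      ∑ a ∈ univ.filter (fun a => src a = v ∧ tgt a = t), if a ∈ J then 0 else u a := by
    simp only [sum_filter]
    exact sum_congr rfl fun a _ => by grind
  have hmax := fun K : Set A =>
    maxFlow_singleNode src tgt s t v u hst hvs hvt hV harc hu K (F K) (hF K)
  rw [hP, hQ] at hcond ⊢
  have hone : throughput F (↑J) T (fun _ => 1) =
      min (∑ a ∈ univ.filter (fun a => src a = s ∧ tgt a = v), if a ∈ J then 0 else u a)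
          (∑ a ∈ univ.filter (fun a => src a = v ∧ tgt a = t), if a ∈ J then 0 else u a) +
        ((T : ℝ) - 1) *
          min (∑ a ∈ univ.filter (fun a => src a = s ∧ tgt a = v), u a)
              (∑ a ∈ univ.filter (fun a => src a = v ∧ tgt a = t), u a) := by
    have hJ := hmax (↑J)
    have h0 := hmax ∅
    simp only [mem_coe, Set.mem_empty_iff_false, if_false] at hJ h0
    rw [← hJ, ← h0]
    have h : ∀ i, F {a | a ∈ (↑J : Set A) ∧ 1 = i} =
        F ∅ + if 1 = i then F (↑J) - F ∅ else 0 := by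
      intro i
      split_ifs with hi <;> simp [hi]
    simp only [throughput, h, sum_add_distrib, sum_ite_eq]
    simp [hT]
    ring
  refine ⟨⟨⟨fun _ => 1, fun a _ => by simp [hT], hone.symm⟩, ?_⟩, hone⟩
  rintro z ⟨σ, hσ, rfl⟩
  have hthr : throughput F (↑J) T σ = ∑ i ∈ Finset.Icc 1 T,
      min (∑ a ∈ univ.filter (fun a => src a = s ∧ tgt a = v),
            if a ∈ J ∧ σ a = i then 0 else u a)
          (∑ a ∈ univ.filter (fun a => src a = v ∧ tgt a = t),
            if a ∈ J ∧ σ a = i then 0 else u a) := by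
    refine sum_congr rfl fun i _ => ?_
    rw [hmax]
    simp only [Set.mem_ofPred_eq, mem_coe]
  rw [hthr]
  rcases hcond with ⟨h1, h2⟩ | ⟨h1, h2⟩
  · rw [min_eq_left h1, min_eq_left h2, ← sum_remaining_capacity _ J u T σ hσ]
    exact sum_le_sum fun i _ => min_le_left _ _
  · rw [min_eq_right h1, min_eq_right h2, ← sum_remaining_capacity _ J u T σ hσ]
    exact sum_le_sum fun i _ => min_le_right _ _
end

section
/- Let N=(V,A,s,t,u) be a network, J ⊆ A a job set, and T ≥ 1 a time horizon. For every s-t cut S ⊆ A, the throughput of every schedule is at most T·Σ_{a ∈ S\J} u_a + (T−1)·Σ_{a ∈ S∩J} u_a. -/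
/-!
This is weak duality between flows and cuts, applied in each time period. The value of a flow is
the net outflow of the node set `W`, so it is at most the total capacity of the cut arcs that are
available (`flowValue_le_cut`). Summing over the periods `1, …, T` and exchanging the two sums, a
cut arc outside `J` is counted `T` times; a cut arc in `J` is counted `T - 1` times, since it is
shut down in exactly one period of the horizon (`sum_available`).
-/

open Finset

/-- Weak duality: the value of a flow avoiding `K` is at most the capacity of the arcs outside `K`
that leave `W`. -/
theorem flowValue_le_cut {V A : Type*} [Fintype V] [Fintype A] [DecidableEq V]
    (src tgt : A → V) (s t : V) (u : A → ℝ) (K : Set A) [DecidablePred (· ∈ K)] (x : A → ℝ)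
    (hx : IsFlow src tgt s t u K x) (W : Finset V) (hsW : s ∈ W) (htW : t ∉ W) :
    flowValue src tgt s x ≤
      ∑ a ∈ univ.filter (fun a => src a ∈ W ∧ tgt a ∉ W), if a ∈ K then 0 else u a := by
  obtain ⟨hcap, hK, hcons⟩ := hx
  -- By conservation, only `s` contributes to the net outflow of `W`.
  have hW : flowValue src tgt s x = ∑ v ∈ W, flowValue src tgt v x := by
    symm
    refine Finset.sum_eq_single_of_mem s hsW fun v hv hvs => ?_
    have hvt : v ≠ t := fun h => htW (h ▸ hv)
    rw [flowValue, hcons v hvs hvt, sub_self]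
  have hswap (f : A → V) : ∑ v ∈ W, ∑ a ∈ univ.filter (fun a => f a = v), x a =
      ∑ a, if f a ∈ W then x a else 0 := by
    simp_rw [Finset.sum_filter]
    rw [Finset.sum_comm]
    exact Finset.sum_congr rfl fun a _ => Finset.sum_ite_eq W (f a) fun _ => x a
  rw [hW]
  unfold flowValue
  rw [Finset.sum_sub_distrib, hswap, hswap, ← Finset.sum_sub_distrib, Finset.sum_filter]
  refine Finset.sum_le_sum fun a _ => ?_
  have h := hcap a
  have hKa := hK a
  by_cases h1 : src a ∈ W <;> by_cases h2 : tgt a ∈ W <;> by_cases h3 : a ∈ K <;>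
    simp_all

/-- An arc that is shut down in a single period `j` of the horizon contributes its capacity in the
remaining `T - 1` periods. -/
theorem sum_available (T j : ℕ) (hj : j ∈ Finset.Icc 1 T) (c : ℝ) :
    (∑ i ∈ Finset.Icc 1 T, if j = i then 0 else c) = ((T : ℝ) - 1) * c := by
  have h : ∀ i, (if j = i then 0 else c) = c - if j = i then c else 0 := by
    intro i; split_ifs <;> simp
  simp_rw [h]
  rw [Finset.sum_sub_distrib, Finset.sum_ite_eq, if_pos hj]
  simp
  ring

/-- Cut-based upper bound (Lemma 1): for every s-t cut `S` (given by a node set `W` with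
`s ∈ W`, `t ∉ W`), the throughput of every schedule is at most
`T·Σ_{a ∈ S\J} u_a + (T−1)·Σ_{a ∈ S∩J} u_a`. -/
theorem throughput_le_cut_bound
    {V A : Type*} [Fintype V] [Fintype A] [DecidableEq V] [DecidableEq A]
    (src tgt : A → V) (s t : V) (u : A → ℝ)
    (hst : s ≠ t) (hu : ∀ a, 0 ≤ u a)
    (J : Finset A) (T : ℕ) (hT : 1 ≤ T)
    (F : Set A → ℝ)
    (hF : ∀ K : Set A, IsGreatest (flowValues src tgt s t u K) (F K))
    (W : Finset V) (hsW : s ∈ W) (htW : t ∉ W)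
    (σ : A → ℕ) (hσ : ∀ a ∈ J, σ a ∈ Finset.Icc 1 T) :
    throughput F (↑J) T σ ≤
      (T : ℝ) * (∑ a ∈ univ.filter (fun a => src a ∈ W ∧ tgt a ∉ W ∧ a ∉ J), u a) +
        ((T : ℝ) - 1) * (∑ a ∈ univ.filter (fun a => src a ∈ W ∧ tgt a ∉ W ∧ a ∈ J), u a) := by
  classical
  have hperiod : ∀ i ∈ Finset.Icc 1 T, F {a | a ∈ (J : Set A) ∧ σ a = i} ≤
      ∑ a ∈ univ.filter (fun a => src a ∈ W ∧ tgt a ∉ W),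
        if a ∈ {a | a ∈ (J : Set A) ∧ σ a = i} then 0 else u a := by
    intro i _
    obtain ⟨x, hx, hval⟩ := (hF {a | a ∈ (J : Set A) ∧ σ a = i}).1
    rw [hval]
    exact flowValue_le_cut src tgt s t u _ x hx W hsW htW
  refine (Finset.sum_le_sum hperiod).trans (le_of_eq ?_)
  rw [Finset.sum_comm, Finset.mul_sum, Finset.mul_sum, Finset.sum_filter, Finset.sum_filter,
    Finset.sum_filter, ← Finset.sum_add_distrib]
  refine Finset.sum_congr rfl fun a _ => ?_
  by_cases hJ : a ∈ J
  · have h := sum_available T (σ a) (hσ a hJ) (u a)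
    simp [hJ, h]
  · simp [hJ]
end

section
/- Let N=(V,A,s,t,u) be a network, J ⊆ A a job set, and T ≥ 1 a time horizon. Let z* be the maximum throughput over all schedules and let z̃ = F(N,J) + (T−1)·F(N,∅) be the throughput of the schedule assigning all jobs to period 1. Then T·z̃ ≥ (T−1)·z* (equivalently, scheduling all jobs in the same period is a (T−1)/T-approximation). -/
/-!
Removing arcs can only shrink the set of feasible flows, so each period of any schedule
contributes at most `F ∅`, and hence `zstar ≤ T * F ∅`. The zero flow gives `0 ≤ F J`, so the
all-in-one-period schedule has throughput at least `(T - 1) * F ∅`.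
-/

open Finset

/-- Scheduling all jobs in the same period is a `(T−1)/T`-approximation: if `z*` is the
maximum throughput over all schedules and `z̃ = F(N,J) + (T−1)·F(N,∅)` is the throughput of
the schedule assigning all jobs to period 1, then `T·z̃ ≥ (T−1)·z*`. -/
theorem allJobsAtTimeOne_approximation
    {V A : Type*} [Fintype V] [Fintype A] [DecidableEq V]
    (src tgt : A → V) (s t : V) (u : A → ℝ)
    (hst : s ≠ t) (hu : ∀ a, 0 ≤ u a)
    (J : Set A) (T : ℕ) (hT : 1 ≤ T)
    (F : Set A → ℝ)
    (hF : ∀ K : Set A, IsGreatest (flowValues src tgt s t u K) (F K))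
    (zstar : ℝ)
    (hzstar : IsGreatest
      {z | ∃ σ : A → ℕ, (∀ a ∈ J, σ a ∈ Finset.Icc 1 T) ∧ z = throughput F J T σ} zstar) :
    (T : ℝ) * (F J + ((T : ℝ) - 1) * F ∅) ≥ ((T : ℝ) - 1) * zstar := by
  have hmono : ∀ K : Set A, F K ≤ F ∅ := fun K => by
    obtain ⟨x, hx, hval⟩ := (hF K).1
    exact (hF ∅).2 ⟨x, ⟨hx.1, fun a ha => ha.elim, hx.2.2⟩, hval⟩
  have hJ : 0 ≤ F J :=
    (hF J).2 ⟨fun _ => 0, ⟨fun a => ⟨le_rfl, hu a⟩, fun _ _ => rfl, fun v _ _ => by simp⟩,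
      by simp [flowValue]⟩
  obtain ⟨σ, -, hσ⟩ := hzstar.1
  have hz : zstar ≤ (T : ℝ) * F ∅ := by
    rw [hσ, throughput]
    calc ∑ i ∈ Finset.Icc 1 T, F {a | a ∈ J ∧ σ a = i}
        ≤ ∑ _i ∈ Finset.Icc 1 T, F ∅ := Finset.sum_le_sum fun i _ => hmono _
      _ = (T : ℝ) * F ∅ := by simp
  have hT' : (0 : ℝ) ≤ (T : ℝ) - 1 := sub_nonneg.2 (by exact_mod_cast hT)
  have hTJ : 0 ≤ (T : ℝ) * F J := mul_nonneg (Nat.cast_nonneg T) hJ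
  have hmul := mul_le_mul_of_nonneg_left hz hT'
  linarith
end

section
/- Let T ≥ 2 and consider the network with node set V={s,v,t} and three arcs, a1 and a2 from s to v and b from v to t, each of capacity 1, with job set J={a1,a2}. Then the maximum throughput over all schedules over T periods equals T (attained by scheduling a1 and a2 in two different periods), while every schedule assigning a1 and a2 to the same period has throughput T−1. Hence the (T−1)/T approximation ratio for scheduling all jobs in the same period is tight on this instance. -/
/-!
Every feasible flow `x` satisfies `x 0 + x 1 = x 2 ≤ 1` by conservation at the middle node, so no
period carries more than `1` (`flow_facts`). One open arc out of the source together with the arc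
into the sink carries a full unit, so a period has maximum flow `1` as long as at most one of the
two source arcs is shut down, and maximum flow `0` when both are (`maxFlow_eq_one`,
`maxFlow_eq_zero`).
A schedule using two different periods hence loses nothing, and a schedule using a single period
loses exactly one unit there.
-/

open Finset

/-- The maximum-flow hypothesis on `F` for the three-arc instance. -/
def IsMaxFlow (F : Set (Fin 3) → ℝ) : Prop :=
  ∀ K : Set (Fin 3), IsGreatest
    (flowValues (fun a : Fin 3 => if a = 2 then (1 : Fin 3) else 0)
      (fun a : Fin 3 => if a = 2 then (2 : Fin 3) else 1)
      (0 : Fin 3) (2 : Fin 3) (fun _ => (1 : ℝ)) K) (F K)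

lemma flowValue_eq (x : Fin 3 → ℝ) :
    flowValue (fun a : Fin 3 => if a = 2 then (1 : Fin 3) else 0)
      (fun a : Fin 3 => if a = 2 then (2 : Fin 3) else 1) (0 : Fin 3) x = x 0 + x 1 := by
  simp [flowValue, Finset.sum_filter, Fin.sum_univ_three]

lemma conservation_iff (x : Fin 3 → ℝ) :
    (∀ v : Fin 3, v ≠ 0 → v ≠ 2 →
      ∑ a ∈ univ.filter (fun a : Fin 3 => (if a = 2 then (2 : Fin 3) else 1) = v), x a =
        ∑ a ∈ univ.filter (fun a : Fin 3 => (if a = 2 then (1 : Fin 3) else 0) = v), x a) ↔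
      x 0 + x 1 = x 2 := by
  simp [Fin.forall_fin_succ, Finset.sum_filter, Fin.sum_univ_three]

/-- The maximum flow with `K` removed is attained by some flow vanishing on `K`, which
satisfies conservation at the middle node and the capacity bound on the arc into the sink. -/
lemma flow_facts {F : Set (Fin 3) → ℝ} (hF : IsMaxFlow F) (K : Set (Fin 3)) :
    ∃ x : Fin 3 → ℝ, (∀ a ∈ K, x a = 0) ∧ F K = x 0 + x 1 ∧ x 0 + x 1 = x 2 ∧ x 2 ≤ 1 := by
  obtain ⟨x, ⟨hb, hK, hc⟩, hv⟩ := (hF K).1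
  rw [flowValue_eq] at hv
  exact ⟨x, hK, hv, (conservation_iff x).1 hc, (hb 2).2⟩

lemma maxFlow_le_one {F : Set (Fin 3) → ℝ} (hF : IsMaxFlow F) (K : Set (Fin 3)) : F K ≤ 1 := by
  obtain ⟨x, -, h1, h2, h3⟩ := flow_facts hF K
  linarith

lemma maxFlow_eq_zero {F : Set (Fin 3) → ℝ} (hF : IsMaxFlow F) {K : Set (Fin 3)}
    (h0 : 0 ∈ K) (h1 : 1 ∈ K) : F K = 0 := by
  obtain ⟨x, hK, hv, -, -⟩ := flow_facts hF K
  rw [hv, hK 0 h0, hK 1 h1, add_zero]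

lemma maxFlow_eq_one {F : Set (Fin 3) → ℝ} (hF : IsMaxFlow F) {K : Set (Fin 3)}
    (h2 : 2 ∉ K) (h : 0 ∉ K ∨ 1 ∉ K) : F K = 1 := by
  refine le_antisymm (maxFlow_le_one hF K) ((hF K).2 ?_)
  -- A unit flow along the open source arc and the sink arc.
  rcases h with h | h
  · refine ⟨![1, 0, 1], ⟨?_, ?_, (conservation_iff _).2 (by simp)⟩, by simp [flowValue_eq]⟩
    · intro a; fin_cases a <;> simp
    · intro a ha; fin_cases a
      · exact absurd ha h
      · simp
      · exact absurd ha h2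
  · refine ⟨![0, 1, 1], ⟨?_, ?_, (conservation_iff _).2 (by simp)⟩, by simp [flowValue_eq]⟩
    · intro a; fin_cases a <;> simp
    · intro a ha; fin_cases a
      · simp
      · exact absurd ha h
      · exact absurd ha h2

lemma throughput_of_ne {F : Set (Fin 3) → ℝ} (hF : IsMaxFlow F) (T : ℕ) (σ : Fin 3 → ℕ)
    (h : σ 0 ≠ σ 1) : throughput F ({0, 1} : Set (Fin 3)) T σ = (T : ℝ) := by
  have key : ∀ i ∈ Finset.Icc 1 T,
      F {a | a ∈ ({0, 1} : Set (Fin 3)) ∧ σ a = i} = 1 := by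
    intro i _
    refine maxFlow_eq_one hF (by simp) ?_
    by_contra! hc
    exact h (hc.1.2.trans hc.2.2.symm)
  rw [throughput, Finset.sum_congr rfl key]
  simp

lemma throughput_of_eq {F : Set (Fin 3) → ℝ} (hF : IsMaxFlow F) (T : ℕ) (σ : Fin 3 → ℕ)
    (hσ : σ 0 ∈ Finset.Icc 1 T) (h : σ 0 = σ 1) :
    throughput F ({0, 1} : Set (Fin 3)) T σ = (T : ℝ) - 1 := by
  have key : ∀ i ∈ Finset.Icc 1 T,
      F {a | a ∈ ({0, 1} : Set (Fin 3)) ∧ σ a = i} = 1 - if σ 0 = i then 1 else 0 := by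
    intro i _
    split_ifs with hi
    · rw [maxFlow_eq_zero hF (by simp [hi]) (by simp [← h, hi]), sub_self]
    · rw [maxFlow_eq_one hF (by simp) (Or.inl (by simp [hi])), sub_zero]
  rw [throughput, Finset.sum_congr rfl key, Finset.sum_sub_distrib, Finset.sum_ite_eq, if_pos hσ]
  simp

/-- Tightness of the `(T−1)/T` approximation ratio: in the network with nodes `{s,v,t}`
(`s = 0`, `v = 1`, `t = 2`), two unit-capacity arcs `a1 = 0`, `a2 = 1` from `s` to `v`
and one unit-capacity arc `b = 2` from `v` to `t`, and job set `J = {a1, a2}`, the maximum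
throughput over `T ≥ 2` periods equals `T` (attained by scheduling `a1` and `a2` in two
different periods), while every schedule putting `a1` and `a2` in the same period has
throughput `T − 1`. -/
theorem approximation_ratio_tight
    (T : ℕ) (hT : 2 ≤ T)
    (F : Set (Fin 3) → ℝ)
    (hF : ∀ K : Set (Fin 3), IsGreatest
      (flowValues (fun a : Fin 3 => if a = 2 then (1 : Fin 3) else 0)
        (fun a : Fin 3 => if a = 2 then (2 : Fin 3) else 1)
        (0 : Fin 3) (2 : Fin 3) (fun _ => (1 : ℝ)) K) (F K)) :
    IsGreatest
      {z | ∃ σ : Fin 3 → ℕ,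
        (∀ a ∈ ({0, 1} : Set (Fin 3)), σ a ∈ Finset.Icc 1 T) ∧
        z = throughput F ({0, 1} : Set (Fin 3)) T σ}
      (T : ℝ) ∧
    throughput F ({0, 1} : Set (Fin 3)) T (fun a => if a = 0 then 1 else 2) = (T : ℝ) ∧
    (∀ σ : Fin 3 → ℕ, (∀ a ∈ ({0, 1} : Set (Fin 3)), σ a ∈ Finset.Icc 1 T) →
      σ 0 = σ 1 → throughput F ({0, 1} : Set (Fin 3)) T σ = (T : ℝ) - 1) := by
  have h01 : throughput F ({0, 1} : Set (Fin 3)) T (fun a => if a = 0 then 1 else 2) = (T : ℝ) :=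
    throughput_of_ne hF T _ (by simp)
  refine ⟨⟨⟨_, ?_, h01.symm⟩, ?_⟩, h01, fun σ hσ h => throughput_of_eq hF T σ (hσ 0 (by simp)) h⟩
  · intro a _
    rw [Finset.mem_Icc]
    split_ifs <;> omega
  · rintro z ⟨σ, -, rfl⟩
    calc throughput F ({0, 1} : Set (Fin 3)) T σ
        ≤ ∑ _i ∈ Finset.Icc 1 T, (1 : ℝ) := Finset.sum_le_sum fun i _ => maxFlow_le_one hF _
      _ = T := by simp
end

section
/- Let (V,A,s,t) be a finite acyclic directed network, let T ≥ 1 be an integer, and let X* : A → ℝ satisfy 0 ≤ X*_a ≤ T for all a and the conservation constraints Σ_{a : tgt(a)=v} X*_a = Σ_{a : src(a)=v} X*_a for every v ∈ V \ {s,t}. Set A* = {a ∈ A : X*_a = T}. Let η : A → ℝ with η_a ≥ 0 for all a, and π : V → ℝ with π_s = π_t = 0, such that for every arc a with src(a)=v and tgt(a)=w: π_v − π_w + η_a ≥ 0, and moreover π_v − π_w + η_a ≥ 1 whenever a ∈ A*. Then Σ_{a∈A} η_a ≥ |A*|. -/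
/-!
Weight the dual constraint of each arc `a` by `X a ≥ 0` and sum over all arcs. This is the sum of
the dual constraints along the paths of a decomposition of `X`, taken without choosing one.
The potential terms contribute `∑ v, π v * (outflow v - inflow v)`, which vanishes because `X` is
conserved off `{s, t}` and `π` is zero on `{s, t}`. Since every saturated arc has weight `T`,
this gives `T * |A*| ≤ ∑ a, X a * η a ≤ T * ∑ a, η a`, and `T > 0` can be cancelled.
-/

open Finset

/-- Consecutive arcs match up: the target of each arc is the source of the next. -/
def ArcChain {V A : Type*} (src tgt : A → V) (p : List A) : Prop :=
  p.Chain' (fun a b => tgt a = src b)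

/-- An s-t path: a nonempty sequence of consecutive arcs starting at `s` and ending at `t`. -/
def IsSTPath {V A : Type*} (src tgt : A → V) (s t : V) (p : List A) : Prop :=
  p ≠ [] ∧ ArcChain src tgt p ∧ p.head?.map src = some s ∧ p.getLast?.map tgt = some t

/-- The network is acyclic: there is no nonempty sequence of consecutive arcs whose last
target equals its first source. -/
def Acyclic {V A : Type*} (src tgt : A → V) : Prop :=
  ¬ ∃ p : List A, p ≠ [] ∧ ArcChain src tgt p ∧ p.getLast?.map tgt = p.head?.map src

/-- The potential terms cancel: a flow conserved off `{s, t}` pairs to zero with the differences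
of a potential vanishing at `s` and `t`. -/
lemma sum_flow_mul_potential_diff_eq_zero {V A : Type*} [Fintype V] [Fintype A] [DecidableEq V]
    (src tgt : A → V) (s t : V) (X : A → ℝ)
    (hcons : ∀ v, v ≠ s → v ≠ t →
      ∑ a ∈ univ.filter (fun a => tgt a = v), X a =
        ∑ a ∈ univ.filter (fun a => src a = v), X a)
    (π : V → ℝ) (hπs : π s = 0) (hπt : π t = 0) :
    ∑ a, X a * (π (src a) - π (tgt a)) = 0 := by
  have regroup : ∀ f : A → V, ∑ a, X a * π (f a) =
      ∑ v, (∑ a ∈ univ.filter (fun a => f a = v), X a) * π v := by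
    intro f
    rw [← Finset.sum_fiberwise univ f]
    refine Finset.sum_congr rfl fun v _ => ?_
    rw [Finset.sum_mul]
    refine Finset.sum_congr rfl fun a ha => ?_
    rw [(Finset.mem_filter.mp ha).2]
  simp only [mul_sub, Finset.sum_sub_distrib]
  rw [regroup src, regroup tgt, sub_eq_zero]
  refine Finset.sum_congr rfl fun v _ => ?_
  by_cases hs : v = s
  · simp [hs, hπs]
  by_cases ht : v = t
  · simp [ht, hπt]
  rw [hcons v hs ht]

/-- Dual lower bound: for a feasible dual solution `(π, η)` of the path-packing LP, the dual
objective `Σ η_a` is at least the number of arcs carrying flow `T`. -/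
theorem dual_objective_ge_card_saturated
    {V A : Type*} [Fintype V] [Fintype A] [DecidableEq V] [DecidableEq A]
    (src tgt : A → V) (s t : V) (hst : s ≠ t)
    (hacyc : Acyclic src tgt)
    (T : ℕ) (hT : 1 ≤ T)
    (X : A → ℝ) (hX : ∀ a, 0 ≤ X a ∧ X a ≤ (T : ℝ))
    (hcons : ∀ v, v ≠ s → v ≠ t →
      ∑ a ∈ univ.filter (fun a => tgt a = v), X a =
        ∑ a ∈ univ.filter (fun a => src a = v), X a)
    (η : A → ℝ) (hη : ∀ a, 0 ≤ η a)
    (π : V → ℝ) (hπs : π s = 0) (hπt : π t = 0)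
    (hdual₁ : ∀ a, π (src a) - π (tgt a) + η a ≥ 0)
    (hdual₂ : ∀ a, X a = (T : ℝ) → π (src a) - π (tgt a) + η a ≥ 1) :
    ∑ a, η a ≥ ((univ.filter (fun a => X a = (T : ℝ))).card : ℝ) := by
  have hTpos : (0 : ℝ) < T := by exact_mod_cast hT
  have hzero := sum_flow_mul_potential_diff_eq_zero src tgt s t X hcons π hπs hπt
  have hweighted : ∑ a, (if X a = (T : ℝ) then (T : ℝ) else 0) ≤
      ∑ a, (X a * (π (src a) - π (tgt a)) + T * η a) := by
    refine Finset.sum_le_sum fun a _ => ?_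
    have hcap : X a * η a ≤ T * η a := mul_le_mul_of_nonneg_right (hX a).2 (hη a)
    split_ifs with h
    · have := mul_le_mul_of_nonneg_left (hdual₂ a h) hTpos.le
      rw [h]
      linarith
    · have := mul_nonneg (hX a).1 (hdual₁ a)
      linarith
  rw [Finset.sum_add_distrib, hzero, zero_add, ← Finset.mul_sum, ← Finset.sum_filter,
    Finset.sum_const, nsmul_eq_mul, mul_comm] at hweighted
  exact le_of_mul_le_mul_left hweighted hTpos
end

section
/- Let N=(V,A,s,t,u) be a network in which every arc has capacity u_a = 1, let J ⊆ A be a job set, and let T ≥ 1 be a time horizon. Then the maximum throughput over all schedules equals the maximum, over all X : A → ℝ satisfying the conservation constraints Σ_{a : tgt(a)=v} X_a = Σ_{a : src(a)=v} X_a for every v ∈ V \ {s,t}, together with 0 ≤ X_a ≤ T for a ∈ A \ J and 0 ≤ X_a ≤ T−1 for a ∈ J, of the aggregated value Σ_{a : src(a)=s} X_a − Σ_{a : tgt(a)=s} X_a. -/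
/-! The maximum throughput is at most the aggregated maximum because adding up the flows of
the `T` periods gives an aggregated flow: an arc of `J` carries nothing in the period in which it
is shut down, hence at most `T - 1` in total.

For the converse, add a return arc `t → s`, so that flows become circulations and the value of a
flow is the amount on the return arc. Everything rests on rounding (`exists_int_rounding`): a real
circulation can be rounded, arc by arc to a floor or a ceiling, to an integral circulation without
decreasing a prescribed arc. If some arc is fractional, conservation makes every node touched by a
fractional arc meet at least two of them (unless a fractional arc is a loop). So there are at least
as many fractional arcs as touched nodes, and since the divergences sum to zero, the
incidence map restricted to the fractional arcs has a nonzero kernel element. Moving along it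
until some arc becomes integral reduces the number of fractional arcs.

Rounding an optimal aggregated flow makes it integral. Rounding `X / k` for an integral `X` with
values in `[0, k]` splits off a 0/1-flow `Z` such that `X - Z` has values in `[0, k - 1]`; iterating
gives `T` 0/1-flows with sum `X` (`exists_decomposition`). An arc of `J` carries at most
`T - 1` in total, hence is unused in one of them, and it is scheduled in that period. -/

open Finset

/-! ### Circulations -/

section Circulation

variable {V E : Type*} [Fintype E] [DecidableEq V]

/-- The net inflow of `x` at each node, as a linear map; its kernel consists of the circulations. -/
def netInflow (src tgt : E → V) : (E → ℝ) →ₗ[ℝ] (V → ℝ) where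
  toFun x v := ∑ e, x e * ((if tgt e = v then 1 else 0) - (if src e = v then 1 else 0))
  map_add' x y := by
    ext v
    simp [add_mul, Finset.sum_add_distrib]
  map_smul' c x := by
    ext v
    simp [mul_assoc, Finset.mul_sum]

lemma netInflow_apply (src tgt : E → V) (x : E → ℝ) (v : V) :
    netInflow src tgt x v =
      ∑ e, x e * ((if tgt e = v then 1 else 0) - (if src e = v then 1 else 0)) := rfl

lemma netInflow_eq_sub (src tgt : E → V) (x : E → ℝ) (v : V) :
    netInflow src tgt x v =
      ∑ e ∈ univ.filter (fun e => tgt e = v), x e -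
        ∑ e ∈ univ.filter (fun e => src e = v), x e := by
  simp [netInflow_apply, mul_sub, Finset.sum_sub_distrib, Finset.sum_filter]

lemma sum_netInflow [Fintype V] (src tgt : E → V) (x : E → ℝ) : ∑ v, netInflow src tgt x v = 0 := by
  simp only [netInflow_apply]
  rw [Finset.sum_comm]
  apply Finset.sum_eq_zero
  intro e _
  rw [← Finset.mul_sum]
  simp

/-- In a circulation without fractional loops, no node meets exactly one fractional arc. -/
lemma exists_other_fractional (src tgt : E → V) (Y : E → ℝ) (hY : netInflow src tgt Y = 0)
    (hloop : ∀ e, Int.fract (Y e) ≠ 0 → src e ≠ tgt e)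
    (v : V) (e : E) (he : Int.fract (Y e) ≠ 0) (hv : src e = v ∨ tgt e = v) :
    ∃ f, f ≠ e ∧ Int.fract (Y f) ≠ 0 ∧ (src f = v ∨ tgt f = v) := by
  classical
  by_contra! hcon
  -- Otherwise all other terms of the divergence at `v` are integers, and so is `± Y e`.
  have h0 : netInflow src tgt Y v = 0 := by rw [hY]; rfl
  rw [netInflow_apply, ← Finset.add_sum_erase _ _ (Finset.mem_univ e)] at h0
  have hint : ∑ f ∈ univ.erase e, Y f *
      ((if tgt f = v then (1 : ℝ) else 0) - (if src f = v then 1 else 0)) =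
      ((∑ f ∈ univ.erase e, ⌊Y f⌋ *
        ((if tgt f = v then 1 else 0) - (if src f = v then 1 else 0)) : ℤ) : ℝ) := by
    push_cast
    apply Finset.sum_congr rfl
    intro f hf
    have hfe : f ≠ e := (Finset.mem_erase.mp hf).1
    by_cases hfr : Int.fract (Y f) = 0
    · have h2 : (⌊Y f⌋ : ℝ) = Y f := by
        have := Int.floor_add_fract (Y f)
        rw [hfr] at this
        linarith
      rw [h2]
    · have := hcon f hfe hfr
      simp [this.1, this.2]
  rw [hint] at h0
  set N : ℤ := ∑ f ∈ univ.erase e, ⌊Y f⌋ *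
        ((if tgt f = v then 1 else 0) - (if src f = v then 1 else 0)) with hN
  apply he
  have hl := hloop e he
  rcases hv with hv | hv
  · have h3 : tgt e ≠ v := fun h => hl (hv.trans h.symm)
    simp only [hv, h3, if_true, if_false] at h0
    have : Y e = (N : ℝ) := by linarith
    rw [this]; exact Int.fract_intCast N
  · have h3 : src e ≠ v := fun h => hl (h.trans hv.symm)
    simp only [hv, h3, if_true, if_false] at h0
    have : Y e = ((-N : ℤ) : ℝ) := by push_cast; linarith
    rw [this]; exact Int.fract_intCast _

/-- A circulation with a fractional arc admits a nonzero circulation supported on its fractional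
arcs. Apart from the case of a fractional loop, there are at least as many fractional arcs as nodes
touched by them, and the incidence map between the two is not surjective because divergences sum
to zero, so it is not injective. -/
lemma exists_direction [Fintype V] (src tgt : E → V) (Y : E → ℝ) (hY : netInflow src tgt Y = 0)
    (hfrac : ∃ e, Int.fract (Y e) ≠ 0) :
    ∃ d : E → ℝ, d ≠ 0 ∧ netInflow src tgt d = 0 ∧ ∀ e, Int.fract (Y e) = 0 → d e = 0 := by
  classical
  by_cases hloop : ∀ e, Int.fract (Y e) ≠ 0 → src e ≠ tgt e
  swap
  · push Not at hloop
    obtain ⟨e, he, hl⟩ := hloop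
    refine ⟨Pi.single e 1, by simp, ?_, ?_⟩
    · ext v
      rw [netInflow_apply]
      apply Finset.sum_eq_zero
      intro f _
      by_cases hf : f = e
      · subst hf; simp [hl]
      · simp [Pi.single_eq_of_ne hf]
    · intro f hf
      have : f ≠ e := fun h => he (h ▸ hf)
      simp [Pi.single_eq_of_ne this]
  set S : Finset E := univ.filter (fun e => Int.fract (Y e) ≠ 0) with hS
  set W : Finset V := univ.filter (fun v => ∃ e ∈ S, src e = v ∨ tgt e = v) with hW
  have hcard : W.card ≤ S.card := by
    have h := Finset.card_mul_le_card_mul (s := W) (t := S) (m := 2) (n := 2)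
      (fun v e => src e = v ∨ tgt e = v) ?_ ?_
    · omega
    · intro v hv
      obtain ⟨e, heS, hev⟩ := (Finset.mem_filter.mp hv).2
      have he : Int.fract (Y e) ≠ 0 := (Finset.mem_filter.mp heS).2
      obtain ⟨f, hfe, hf, hfv⟩ := exists_other_fractional src tgt Y hY hloop v e he hev
      have : ({e, f} : Finset E) ⊆ Finset.bipartiteAbove
          (fun v e => src e = v ∨ tgt e = v) S v := by
        intro g hg
        simp only [Finset.mem_insert, Finset.mem_singleton] at hg
        rw [Finset.mem_bipartiteAbove]
        rcases hg with rfl | rfl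
        · exact ⟨heS, hev⟩
        · exact ⟨by simp [hS, hf], hfv⟩
      have h2 := Finset.card_le_card this
      rwa [Finset.card_pair hfe.symm] at h2
    · intro e _
      have : Finset.bipartiteBelow (fun v e => src e = v ∨ tgt e = v) W e ⊆ {src e, tgt e} := by
        intro g hg
        rw [Finset.mem_bipartiteBelow] at hg
        simp only [Finset.mem_insert, Finset.mem_singleton]
        rcases hg.2 with h | h
        · exact Or.inl h.symm
        · exact Or.inr h.symm
      exact (Finset.card_le_card this).trans Finset.card_le_two
  -- Extension by zero followed by the incidence map, read off at the touched nodes only.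
  let ext0 : (S → ℝ) →ₗ[ℝ] (E → ℝ) := Function.ExtendByZero.linearMap ℝ (Subtype.val : S → E)
  have ext0_in : ∀ (x : S → ℝ) (e : S), ext0 x e = x e := fun x e =>
    Subtype.val_injective.extend_apply x 0 e
  have ext0_out : ∀ (x : S → ℝ) (e : E), e ∉ S → ext0 x e = 0 := by
    intro x e he
    apply Function.extend_apply'
    rintro ⟨a, rfl⟩
    exact he a.2
  let f : (S → ℝ) →ₗ[ℝ] (W → ℝ) :=
    (LinearMap.funLeft ℝ ℝ (Subtype.val : W → V)) ∘ₗ (netInflow src tgt) ∘ₗ ext0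
  have hf_apply : ∀ x w, f x w = netInflow src tgt (ext0 x) w := fun _ _ => rfl
  have hout : ∀ (x : S → ℝ) (v : V), v ∉ W → netInflow src tgt (ext0 x) v = 0 := by
    intro x v hv
    rw [netInflow_apply]
    apply Finset.sum_eq_zero
    intro e _
    by_cases he : e ∈ S
    · have : ¬ (src e = v ∨ tgt e = v) := fun h =>
        hv (Finset.mem_filter.mpr ⟨Finset.mem_univ _, e, he, h⟩)
      push Not at this
      simp [this.1, this.2]
    · simp [ext0_out x e he]
  have hsum : ∀ x, ∑ w, f x w = 0 := by
    intro x
    rw [← sum_netInflow src tgt (ext0 x)]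
    simp only [hf_apply]
    rw [Finset.sum_coe_sort W (fun v => netInflow src tgt (ext0 x) v)]
    apply Finset.sum_subset (Finset.subset_univ _)
    intro v _ hv
    exact hout x v hv
  have hninj : ¬ Function.Injective f := by
    intro hinj
    have hle := LinearMap.finrank_le_finrank_of_injective hinj
    simp only [Module.finrank_fintype_fun_eq_card, Fintype.card_coe] at hle
    have heq : Module.finrank ℝ (S → ℝ) = Module.finrank ℝ (W → ℝ) := by
      simp only [Module.finrank_fintype_fun_eq_card, Fintype.card_coe]
      omega
    have hsurj := (LinearMap.injective_iff_surjective_of_finrank_eq_finrank heq).mp hinj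
    obtain ⟨e, he⟩ := hfrac
    have hw : src e ∈ W := by
      simp only [hW, Finset.mem_filter, Finset.mem_univ, true_and]
      exact ⟨e, by simp [hS, he], Or.inl rfl⟩
    obtain ⟨x, hx⟩ := hsurj (Pi.single ⟨src e, hw⟩ 1)
    have h := hsum x
    rw [hx] at h
    simp at h
  rw [← LinearMap.ker_eq_bot, Submodule.eq_bot_iff] at hninj
  push Not at hninj
  obtain ⟨x, hx, hx0⟩ := hninj
  refine ⟨ext0 x, ?_, ?_, ?_⟩
  · intro h
    apply hx0
    ext e
    rw [← ext0_in x e, h]; rfl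
  · ext v
    by_cases hv : v ∈ W
    · have := congrFun (LinearMap.mem_ker.mp hx) ⟨v, hv⟩
      exact this
    · exact hout x v hv
  · intro e he
    exact ext0_out x e (by simp [hS, he])

/-! ### Rounding -/

/-- One rounding step: move along a direction on the fractional arcs until the first of them
becomes integral. -/
lemma exists_rounding_step [Fintype V] (src tgt : E → V) (e₀ : E) (Y : E → ℝ)
    (hY : netInflow src tgt Y = 0) (hfrac : ∃ e, Int.fract (Y e) ≠ 0) :
    ∃ Y' : E → ℝ, netInflow src tgt Y' = 0 ∧
      (∀ e, (⌊Y e⌋ : ℝ) ≤ Y' e ∧ Y' e ≤ (⌈Y e⌉ : ℝ)) ∧ Y e₀ ≤ Y' e₀ ∧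
      (∀ e, Int.fract (Y e) = 0 → Int.fract (Y' e) = 0) ∧
      ∃ e, Int.fract (Y e) ≠ 0 ∧ Int.fract (Y' e) = 0 := by
  classical
  obtain ⟨d, hd0, hd, hsupp, hde⟩ : ∃ d : E → ℝ, d ≠ 0 ∧ netInflow src tgt d = 0 ∧
      (∀ e, Int.fract (Y e) = 0 → d e = 0) ∧ 0 ≤ d e₀ := by
    obtain ⟨d, hd0, hd, hsupp⟩ := exists_direction src tgt Y hY hfrac
    rcases le_total 0 (d e₀) with h | h
    · exact ⟨d, hd0, hd, hsupp, h⟩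
    · refine ⟨-d, by simpa using hd0, by simp [hd], ?_, by simpa using h⟩
      intro e he
      simp [hsupp e he]
  -- `step e` is the step length at which the arc `e` becomes integral.
  let target : E → ℤ := fun e => if 0 < d e then ⌈Y e⌉ else ⌊Y e⌋
  let step : E → ℝ := fun e => (target e - Y e) / d e
  have hne : (univ.filter (fun e => d e ≠ 0)).Nonempty := by
    obtain ⟨e, he⟩ := Function.ne_iff.mp hd0
    exact ⟨e, by simpa using he⟩
  obtain ⟨m, hm, hmin⟩ := Finset.exists_min_image _ step hne
  have hm0 : d m ≠ 0 := (Finset.mem_filter.mp hm).2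
  have hstep_nonneg : 0 ≤ step m := by
    simp only [step, target]
    split_ifs with h
    · exact div_nonneg (sub_nonneg.mpr (Int.le_ceil _)) h.le
    · exact div_nonneg_of_nonpos (sub_nonpos.mpr (Int.floor_le _)) (not_lt.mp h)
  refine ⟨Y + step m • d, by simp [hY, hd], ?_, ?_, ?_, m, ?_, ?_⟩
  · intro e
    have hfl := Int.floor_le (Y e)
    have hce := Int.le_ceil (Y e)
    simp only [Pi.add_apply, Pi.smul_apply, smul_eq_mul]
    rcases lt_trichotomy (d e) 0 with h | h | h
    · have hle := hmin e (by simp [h.ne])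
      have h1 : step e * d e = ⌊Y e⌋ - Y e := by
        simp only [step, target, not_lt.mpr h.le, if_false]
        exact div_mul_cancel₀ _ h.ne
      have h2 : step e * d e ≤ step m * d e := mul_le_mul_of_nonpos_right hle h.le
      have h3 : step m * d e ≤ 0 := mul_nonpos_of_nonneg_of_nonpos hstep_nonneg h.le
      constructor <;> linarith
    · rw [h]
      constructor <;> linarith
    · have hle := hmin e (by simp [h.ne'])
      have h1 : step e * d e = ⌈Y e⌉ - Y e := by
        simp only [step, target, h, if_true]
        field_simp
      have h2 : step m * d e ≤ step e * d e := mul_le_mul_of_nonneg_right hle h.le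
      have h3 : 0 ≤ step m * d e := mul_nonneg hstep_nonneg h.le
      constructor <;> linarith
  · simp only [Pi.add_apply, Pi.smul_apply, smul_eq_mul]
    have := mul_nonneg hstep_nonneg hde
    linarith
  · intro e he
    simp [hsupp e he, he]
  · exact fun h => hm0 (hsupp m h)
  · have : (Y + step m • d) m = (target m : ℝ) := by
      simp only [Pi.add_apply, Pi.smul_apply, smul_eq_mul, step]
      field_simp
      ring
    rw [this]
    exact Int.fract_intCast _

/-- A real circulation can be rounded, arc by arc to a floor or a ceiling, to an integral
circulation whose amount on the arc `e₀` is not smaller. -/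
lemma exists_int_rounding [Fintype V] (src tgt : E → V) (e₀ : E) (Y : E → ℝ)
    (hY : netInflow src tgt Y = 0) :
    ∃ Z : E → ℤ, netInflow src tgt (fun e => (Z e : ℝ)) = 0 ∧
      (∀ e, ⌊Y e⌋ ≤ Z e ∧ Z e ≤ ⌈Y e⌉) ∧ Y e₀ ≤ Z e₀ := by
  classical
  induction h : (univ.filter (fun e => Int.fract (Y e) ≠ 0)).card using Nat.strong_induction_on
    generalizing Y with
  | _ n ih =>
    by_cases hfrac : ∃ e, Int.fract (Y e) ≠ 0
    · obtain ⟨Y', hY', hb, he, hmono, m, hm, hm'⟩ := exists_rounding_step src tgt e₀ Y hY hfrac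
      have hlt : (univ.filter (fun e => Int.fract (Y' e) ≠ 0)).card < n := by
        rw [← h]
        apply Finset.card_lt_card
        rw [Finset.ssubset_iff_of_subset]
        · exact ⟨m, by simp [hm], by simp [hm']⟩
        · intro e
          simp only [Finset.mem_filter, Finset.mem_univ, true_and]
          exact fun h1 h2 => h1 (hmono e h2)
      obtain ⟨Z, hZ, hZb, hZe⟩ := ih _ hlt Y' hY' rfl
      refine ⟨Z, hZ, fun e => ⟨?_, ?_⟩, he.trans hZe⟩
      · exact (Int.le_floor.mpr (hb e).1).trans (hZb e).1
      · exact (hZb e).2.trans (Int.ceil_le.mpr (hb e).2)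
    · push Not at hfrac
      have hfl : ∀ e, (⌊Y e⌋ : ℝ) = Y e := by
        intro e
        have := Int.floor_add_fract (Y e)
        rw [hfrac e] at this
        linarith
      refine ⟨fun e => ⌊Y e⌋, ?_, fun e => ⟨le_rfl, Int.floor_le_ceil _⟩, (hfl e₀).ge⟩
      simp only [hfl]
      exact hY

/-- An integral circulation with values in `[0, k]` on the arcs satisfying `P` is a sum of `k`
integral circulations with values in `{0, 1}` there (`k ≥ 1`). -/
lemma exists_decomposition [Fintype V] (src tgt : E → V) (P : E → Prop) (k : ℕ) (hk : 1 ≤ k) (X : E → ℤ)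
    (hX : netInflow src tgt (fun e => (X e : ℝ)) = 0)
    (hb : ∀ e, P e → 0 ≤ X e ∧ X e ≤ k) :
    ∃ Z : ℕ → E → ℤ, (∀ i, netInflow src tgt (fun e => (Z i e : ℝ)) = 0) ∧
      (∀ i e, P e → 0 ≤ Z i e ∧ Z i e ≤ 1) ∧ ∀ e, ∑ i ∈ range k, Z i e = X e := by
  induction k, hk using Nat.le_induction generalizing X with
  | base => exact ⟨fun _ => X, fun _ => hX, fun _ e he => by simpa using hb e he, by simp⟩
  | succ k hk ih =>
    rcases isEmpty_or_nonempty E with hE | ⟨⟨e₀⟩⟩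
    · exact ⟨fun _ => X, fun _ => hX, fun _ e => hE.elim e, fun e => hE.elim e⟩
    have hk0 : (0 : ℝ) < (k : ℝ) + 1 := by positivity
    obtain ⟨Z, hZ, hZb, -⟩ := exists_int_rounding src tgt e₀
      (((k : ℝ) + 1)⁻¹ • fun e => (X e : ℝ)) (by rw [map_smul, hX, smul_zero])
    have hZ01 : ∀ e, P e → (0 ≤ Z e ∧ Z e ≤ 1) ∧ (0 ≤ X e - Z e ∧ X e - Z e ≤ k) := by
      intro e he
      obtain ⟨h0, h1⟩ := hb e he
      obtain ⟨hl, hu⟩ := hZb e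
      simp only [Pi.smul_apply, smul_eq_mul] at hl hu
      have h0' : (0 : ℝ) ≤ X e := by exact_mod_cast h0
      have h1' : (X e : ℝ) ≤ k + 1 := by exact_mod_cast h1
      have hZ0 : 0 ≤ Z e := le_trans (Int.floor_nonneg.mpr (by positivity)) hl
      have hZ1 : Z e ≤ 1 := by
        refine hu.trans (Int.ceil_le.mpr ?_)
        rw [inv_mul_le_iff₀ hk0]
        push_cast
        linarith
      refine ⟨⟨hZ0, hZ1⟩, ?_, ?_⟩
      · rcases h0.eq_or_lt with h | h
        · rw [← h] at hu
          simp at hu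
          omega
        · omega
      · rcases h1.eq_or_lt with h | h
        · have hone : ((k : ℝ) + 1)⁻¹ * (X e : ℝ) = 1 := by
            rw [h]
            push_cast
            field_simp
          rw [hone] at hl
          simp at hl
          push_cast at h
          omega
        · push_cast at h
          omega
    obtain ⟨Z', hZ', hZ'b, hsum⟩ := ih (fun e => X e - Z e)
      (by
        have : (fun e => ((X e - Z e : ℤ) : ℝ)) = (fun e => (X e : ℝ)) - fun e => (Z e : ℝ) := by
          ext e; simp
        rw [this, map_sub, hX, hZ, sub_zero])
      (fun e he => (hZ01 e he).2)
    refine ⟨fun i => if i = k then Z else Z' i, ?_, ?_, ?_⟩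
    · intro i
      by_cases hi : i = k
      · simpa [hi] using hZ
      · simpa [hi] using hZ' i
    · intro i e he
      by_cases hi : i = k
      · simpa [hi] using (hZ01 e he).1
      · simpa [hi] using hZ'b i e he
    · intro e
      rw [Finset.sum_range_succ]
      have : ∑ i ∈ range k, (if i = k then Z else Z' i) e = ∑ i ∈ range k, Z' i e := by
        apply Finset.sum_congr rfl
        intro i hi
        rw [if_neg (Finset.mem_range.mp hi).ne]
      rw [this, hsum e]
      simp

end Circulation

/-! ### The return arc -/

section ReturnArc

variable {V A : Type*} [Fintype A] [DecidableEq V]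

/-- The arc `none` is the return arc from `t` to `s`. -/
lemma netInflow_return (src tgt : A → V) (s t : V) (x : Option A → ℝ) (v : V) :
    netInflow (fun e : Option A => e.elim t src) (fun e : Option A => e.elim s tgt) x v =
      x none * ((if s = v then 1 else 0) - (if t = v then 1 else 0)) +
        netInflow src tgt (fun a => x (some a)) v := by
  rw [netInflow_apply, netInflow_apply, Fintype.sum_option]
  rfl

lemma flowValue_eq_s14 (src tgt : A → V) (s : V) (x : A → ℝ) :
    flowValue src tgt s x = - netInflow src tgt x s := by
  rw [flowValue, netInflow_eq_sub]
  ring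

/-- A flow together with its value on the return arc is a circulation. -/
lemma circulation_of_flow [Fintype V] (src tgt : A → V) (s t : V) (hst : s ≠ t) (x : A → ℝ)
    (hx : ∀ v, v ≠ s → v ≠ t →
      ∑ a ∈ univ.filter (fun a => tgt a = v), x a =
        ∑ a ∈ univ.filter (fun a => src a = v), x a) :
    netInflow (fun e : Option A => e.elim t src) (fun e : Option A => e.elim s tgt)
      (fun e => e.elim (flowValue src tgt s x) x) = 0 := by
  have hother : ∀ v, v ≠ t → netInflow (fun e : Option A => e.elim t src)
      (fun e : Option A => e.elim s tgt) (fun e => e.elim (flowValue src tgt s x) x) v = 0 := by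
    intro v hvt
    rw [netInflow_return]
    by_cases hvs : v = s
    · subst hvs
      simp [flowValue_eq_s14, hst.symm]
    · have h := netInflow_eq_sub src tgt x v
      rw [hx v hvs hvt, sub_self] at h
      simp [Ne.symm hvs, Ne.symm hvt, h]
  ext v
  by_cases hvt : v = t
  · have h := sum_netInflow (fun e : Option A => e.elim t src)
      (fun e : Option A => e.elim s tgt) (fun e => e.elim (flowValue src tgt s x) x)
    rw [Finset.sum_eq_single t (fun w _ hw => hother w hw) (by simp)] at h
    rw [hvt]
    exact h
  · exact hother v hvt

lemma flow_of_circulation (src tgt : A → V) (s t : V) (hst : s ≠ t) (x : Option A → ℝ)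
    (hx : netInflow (fun e : Option A => e.elim t src) (fun e : Option A => e.elim s tgt) x = 0) :
    (∀ v, v ≠ s → v ≠ t →
      ∑ a ∈ univ.filter (fun a => tgt a = v), x (some a) =
        ∑ a ∈ univ.filter (fun a => src a = v), x (some a)) ∧
    flowValue src tgt s (fun a => x (some a)) = x none := by
  constructor
  · intro v hvs hvt
    have h := congrFun hx v
    rw [netInflow_return, netInflow_eq_sub] at h
    simp [Ne.symm hvs, Ne.symm hvt] at h
    linarith
  · have h := congrFun hx s
    rw [netInflow_return] at h
    simp [hst.symm] at h
    rw [flowValue_eq_s14]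
    linarith

end ReturnArc

/-! ### Comparison of the two maxima -/

/-- For a network in which every arc has capacity 1, the maximum throughput over all
schedules equals the maximum of the aggregated flow problem where flow on arcs outside `J`
is bounded by `T` and flow on arcs of `J` is bounded by `T − 1`. -/
theorem unitCapacity_maxThroughput_eq_aggregated
    {V A : Type*} [Fintype V] [Fintype A] [DecidableEq V]
    (src tgt : A → V) (s t : V) (u : A → ℝ)
    (hst : s ≠ t) (hu : ∀ a, u a = 1)
    (J : Set A) (T : ℕ) (hT : 1 ≤ T)
    (F : Set A → ℝ)
    (hF : ∀ K : Set A, IsGreatest (flowValues src tgt s t u K) (F K))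
    (z₁ z₂ : ℝ)
    (h₁ : IsGreatest
      {z | ∃ σ : A → ℕ, (∀ a ∈ J, σ a ∈ Finset.Icc 1 T) ∧ z = throughput F J T σ} z₁)
    (h₂ : IsGreatest
      {z | ∃ X : A → ℝ,
        (∀ v, v ≠ s → v ≠ t →
          ∑ a ∈ univ.filter (fun a => tgt a = v), X a =
            ∑ a ∈ univ.filter (fun a => src a = v), X a) ∧
        (∀ a, 0 ≤ X a) ∧
        (∀ a, a ∉ J → X a ≤ (T : ℝ)) ∧
        (∀ a, a ∈ J → X a ≤ (T : ℝ) - 1) ∧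
        z = flowValue src tgt s X} z₂) :
    z₁ = z₂ := by
  classical
  apply le_antisymm
  · obtain ⟨σ, hσ, rfl⟩ := h₁.1
    choose x hx hval using fun i => (hF {a | a ∈ J ∧ σ a = i}).1
    have hle : ∀ i a, x i a ≤ 1 := fun i a => ((hx i).1 a).2.trans (hu a).le
    apply h₂.2
    refine ⟨fun a => ∑ i ∈ Finset.Icc 1 T, x i a, ?_, ?_, ?_, ?_, ?_⟩
    · intro v hvs hvt
      rw [Finset.sum_comm, Finset.sum_comm (s := univ.filter (fun a => src a = v))]
      exact Finset.sum_congr rfl fun i _ => (hx i).2.2 v hvs hvt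
    · exact fun a => Finset.sum_nonneg fun i _ => ((hx i).1 a).1
    · intro a _
      calc ∑ i ∈ Finset.Icc 1 T, x i a ≤ ∑ i ∈ Finset.Icc 1 T, (1 : ℝ) :=
            Finset.sum_le_sum fun i _ => hle i a
        _ = T := by simp
    · intro a ha
      beta_reduce
      rw [← Finset.add_sum_erase _ _ (hσ a ha), (hx (σ a)).2.1 a ⟨ha, rfl⟩, zero_add]
      calc ∑ i ∈ (Finset.Icc 1 T).erase (σ a), x i a
          ≤ ∑ i ∈ (Finset.Icc 1 T).erase (σ a), (1 : ℝ) :=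
            Finset.sum_le_sum fun i _ => hle i a
        _ = (T : ℝ) - 1 := by
            rw [Finset.sum_const, Finset.card_erase_of_mem (hσ a ha)]
            simp [Nat.cast_sub hT]
    · rw [throughput, flowValue, Finset.sum_comm,
        Finset.sum_comm (s := univ.filter (fun a => tgt a = s)), ← Finset.sum_sub_distrib]
      exact Finset.sum_congr rfl fun i _ => hval i
  · obtain ⟨X, hcons, hX0, hXT, hXJ, rfl⟩ := h₂.1
    obtain ⟨Y, hY, hYb, hYval⟩ := exists_int_rounding _ _ none _
      (circulation_of_flow src tgt s t hst X hcons)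
    have hY0 : ∀ a, 0 ≤ Y (some a) := fun a =>
      (Int.floor_nonneg.mpr (hX0 a)).trans (hYb (some a)).1
    have hYJ : ∀ a ∈ J, Y (some a) ≤ (T : ℤ) - 1 := fun a ha =>
      (hYb (some a)).2.trans (Int.ceil_le.mpr (by push_cast; exact hXJ a ha))
    have hYT : ∀ a, Y (some a) ≤ (T : ℤ) := by
      intro a
      by_cases ha : a ∈ J
      · have := hYJ a ha
        omega
      · exact (hYb (some a)).2.trans (Int.ceil_le.mpr (by push_cast; exact hXT a ha))
    obtain ⟨Z, hZ, hZb, hsum⟩ := exists_decomposition _ _ (fun e : Option A => e ≠ none) T hT Y hY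
      (by
        rintro (_ | a) he
        · exact absurd rfl he
        · exact ⟨hY0 a, hYT a⟩)
    have hidle : ∀ a, ∃ i, a ∈ J → i ∈ range T ∧ Z i (some a) = 0 := by
      intro a
      by_contra! hcon
      have ha : a ∈ J := (hcon 0).1
      have h1 : ∑ i ∈ range T, (1 : ℤ) ≤ ∑ i ∈ range T, Z i (some a) := by
        apply Finset.sum_le_sum
        intro i hi
        have h2 := (hcon i).2 hi
        have h3 := (hZb i (some a) (by simp)).1
        omega
      rw [hsum] at h1
      have := hYJ a ha
      simp at h1
      omega
    choose τ hτ using hidle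
    -- Periods are numbered from 1, the parts of the decomposition from 0.
    have hthr : throughput F J T (fun a => τ a + 1) ≤ z₁ := by
      apply h₁.2
      refine ⟨fun a => τ a + 1, ?_, rfl⟩
      intro a ha
      have := Finset.mem_range.mp (hτ a ha).1
      simp only [Finset.mem_Icc]
      omega
    refine le_trans ?_ hthr
    have hF_ge : ∀ i, (Z i none : ℝ) ≤ F {a | a ∈ J ∧ τ a + 1 = i + 1} := by
      intro i
      obtain ⟨hc, hv⟩ := flow_of_circulation src tgt s t hst _ (hZ i)
      apply (hF _).2
      refine ⟨fun a => (Z i (some a) : ℝ), ⟨?_, ?_, hc⟩, hv.symm⟩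
      · intro a
        obtain ⟨h0, h1⟩ := hZb i (some a) (by simp)
        rw [hu a]
        beta_reduce
        exact ⟨by exact_mod_cast h0, by exact_mod_cast h1⟩
      · rintro a ⟨ha, hi⟩
        have h := (hτ a ha).2
        have hi' : τ a = i := by omega
        rw [hi'] at h
        simp [h]
    calc flowValue src tgt s X ≤ (Y none : ℝ) := hYval
      _ = ∑ i ∈ range T, (Z i none : ℝ) := by rw [← hsum none]; push_cast; rfl
      _ ≤ ∑ i ∈ range T, F {a | a ∈ J ∧ τ a + 1 = i + 1} :=
          Finset.sum_le_sum fun i _ => hF_ge i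
      _ = throughput F J T (fun a => τ a + 1) := by
          rw [throughput, Finset.range_eq_Ico,
            Finset.sum_Ico_add' (fun i => F {a | a ∈ J ∧ τ a + 1 = i}) 0 T 1]
          rfl
end

section
/- Let N=(V,A,s,t,u) be a network in which every arc has capacity u_a = 1, let T ≥ 1 be a time horizon, and for each arc a let m_a ∈ ℕ with m_a ≤ T be a number of unit-time maintenance jobs on a. A multi-job schedule assigns to each arc a a set of m_a distinct periods in {1,…,T} (the periods in which a is shut down), and its throughput is Σ_{i=1}^{T} F(N, K_i) where K_i is the set of arcs shut down in period i. Then the maximum throughput over all multi-job schedules equals the maximum, over all X : A → ℝ satisfying the conservation constraints Σ_{a : tgt(a)=v} X_a = Σ_{a : src(a)=v} X_a for every v ∈ V \ {s,t} and 0 ≤ X_a ≤ T − m_a for all a ∈ A, of the aggregated value Σ_{a : src(a)=s} X_a − Σ_{a : tgt(a)=s} X_a. -/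
/-!
The inequality `z₁ ≤ z₂` holds because summing the flows of the individual periods gives an
aggregated flow: arc `a` carries at most one unit in each of its `T - m a` open periods.

For `z₂ ≤ z₁`, identify the sink with the source, so that flows become circulations. The tool is a
rounding lemma (`exists_round`): every real circulation `x` can be rounded to an integral one
within `⌊x⌋ ≤ y ≤ ⌈x⌉`, without decreasing a prescribed linear functional. Indeed, every node
incident to the set `S` of fractional arcs meets `S` at least twice, so `S` touches at most `|S|`
nodes; as the entries of the net inflow of any flow sum to zero, the net inflow map on `ℝ^S` is
not injective (`exists_circ_support`). Moving `x` along a kernel vector until a fractional arc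
becomes integral reduces `|S|`.

Rounding an optimal aggregated flow gives an integral one `Y` with `0 ≤ Y ≤ T - m`. Rounding
`Y / T`, subtracting, and iterating splits `Y` into `T` circulations with values in `{0, 1}`
(`exists_decomp`). Arc `a` is unused in `T - Y a ≥ m a` of them, and its jobs are placed in `m a`
of these periods.
-/

open Finset

/-! ### Circulations and their rounding -/

/-- `x` is a circulation: flow is conserved at every node. -/
def Circ {V A : Type*} [Fintype A] [DecidableEq V] (src tgt : A → V) (x : A → ℝ) : Prop :=
  ∀ v, ∑ a ∈ univ.filter (fun a => tgt a = v), x a =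
    ∑ a ∈ univ.filter (fun a => src a = v), x a

/-- The integers as a subgroup of `ℝ`. -/
def intSub : AddSubgroup ℝ := (Int.castAddHom ℝ).range

lemma mem_intSub {r : ℝ} : r ∈ intSub ↔ ∃ n : ℤ, (n : ℝ) = r := by
  exact AddMonoidHom.mem_range

/-- If the arc `a₀` is the only incidence of `v` with a non-integral arc, then conservation at `v`
forces `x a₀` to be an integer. The roles of `f` and `g` as source and target are interchangeable. -/
lemma int_of_unique {V A : Type*} [Fintype A] [DecidableEq V] (f g : A → V) (x : A → ℝ) (v : V)
    (h : ∑ a ∈ univ.filter (fun a => f a = v), x a = ∑ a ∈ univ.filter (fun a => g a = v), x a)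
    (a₀ : A) (ha₀ : f a₀ = v)
    (hf : ∀ b, x b ∉ intSub → f b = v → b = a₀) (hg : ∀ b, x b ∉ intSub → g b ≠ v) :
    x a₀ ∈ intSub := by
  classical
  have hmem : a₀ ∈ univ.filter (fun a => f a = v) := by simp [ha₀]
  rw [← Finset.add_sum_erase _ _ hmem] at h
  have e : x a₀ = ∑ a ∈ univ.filter (fun a => g a = v), x a -
      ∑ a ∈ (univ.filter (fun a => f a = v)).erase a₀, x a := by linarith
  rw [e]
  refine intSub.sub_mem (sum_mem fun b hb => ?_) (sum_mem fun b hb => ?_)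
  · by_contra hc
    exact hg b hc (by simpa using hb)
  · by_contra hc
    simp only [mem_erase, mem_filter, mem_univ, true_and] at hb
    exact hb.1 (hf b hc hb.2)

/-- A circulation with a non-integral arc admits a nonzero circulation supported on its
non-integral arcs. -/
lemma exists_circ_support {V A : Type*} [Fintype A] [DecidableEq V] (src tgt : A → V)
    (x : A → ℝ) (hx : Circ src tgt x) (a₁ : A) (ha₁ : x a₁ ∉ intSub) :
    ∃ d : A → ℝ, Circ src tgt d ∧ (∀ a, x a ∈ intSub → d a = 0) ∧ ∃ a, d a ≠ 0 := by
  classical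
  set S : Finset A := univ.filter (fun a => x a ∉ intSub) with hS
  have memS : ∀ a, a ∈ S ↔ x a ∉ intSub := by simp [hS]
  set W : Finset V := S.image src ∪ S.image tgt with hW
  have hsW : ∀ a ∈ S, src a ∈ W := fun a ha => mem_union_left _ (mem_image_of_mem _ ha)
  have htW : ∀ a ∈ S, tgt a ∈ W := fun a ha => mem_union_right _ (mem_image_of_mem _ ha)
  have hdeg : ∀ v ∈ W, 2 ≤ (S.filter (fun a => src a = v)).card +
      (S.filter (fun a => tgt a = v)).card := by
    intro v hv
    by_contra hlt
    have key : ∀ f g : A → V, (∑ a ∈ univ.filter (fun a => f a = v), x a =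
          ∑ a ∈ univ.filter (fun a => g a = v), x a) →
        (S.filter (fun a => f a = v)).card + (S.filter (fun a => g a = v)).card < 2 →
        ∀ a ∈ S, f a = v → False := by
      intro f g h hc a ha hfa
      have hpos : 0 < (S.filter (fun a => f a = v)).card :=
        Finset.card_pos.mpr ⟨a, by simp [ha, hfa]⟩
      have h1 : (S.filter (fun a => f a = v)).card ≤ 1 := by omega
      have h0 : (S.filter (fun a => g a = v)).card = 0 := by omega
      rw [Finset.card_eq_zero] at h0
      refine (memS a).1 ha (int_of_unique f g x v h a hfa (fun b hb hfb => ?_) fun b hb hgb => ?_)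
      · exact Finset.card_le_one.mp h1 b (by simp [memS, hb, hfb]) a (by simp [ha, hfa])
      · have : b ∈ S.filter (fun a => g a = v) := by simp [memS, hb, hgb]
        rw [h0] at this
        simp at this
    rcases mem_union.1 hv with h | h
    · obtain ⟨a, ha, hav⟩ := mem_image.1 h
      exact key src tgt (hx v).symm (by omega) a ha hav
    · obtain ⟨a, ha, hav⟩ := mem_image.1 h
      exact key tgt src (hx v) (by omega) a ha hav
  have hcard : W.card ≤ S.card := by
    have h1 := Finset.card_eq_sum_card_fiberwise (f := src) (s := S) (t := W) hsW
    have h2 := Finset.card_eq_sum_card_fiberwise (f := tgt) (s := S) (t := W) htW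
    have h3 := Finset.sum_le_sum hdeg
    rw [Finset.sum_add_distrib] at h3
    simp only [sum_const, smul_eq_mul] at h3
    omega
  -- Net inflow at the nodes of `W` as a linear map on `ℝ^S`.
  let L : (S → ℝ) →ₗ[ℝ] (W → ℝ) :=
    { toFun := fun d v => ∑ a : S, ((if tgt a = v then d a else 0) - (if src a = v then d a else 0))
      map_add' := by
        intro d e
        ext v
        simp only [Pi.add_apply, ← Finset.sum_add_distrib]
        refine Finset.sum_congr rfl fun a _ => ?_
        split_ifs <;> ring
      map_smul' := by
        intro c d
        ext v
        simp only [Pi.smul_apply, smul_eq_mul, Finset.mul_sum, RingHom.id_apply]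
        refine Finset.sum_congr rfl fun a _ => ?_
        split_ifs <;> ring }
  have hLsum : ∀ d, ∑ v, L d v = 0 := by
    intro d
    change ∑ v : W, ∑ a : S, _ = 0
    rw [Finset.sum_comm]
    refine Finset.sum_eq_zero fun a _ => ?_
    rw [Finset.sum_sub_distrib,
      Finset.sum_eq_single (⟨tgt a, htW a a.2⟩ : W), Finset.sum_eq_single (⟨src a, hsW a a.2⟩ : W)]
    · simp
    · intro b _ hb
      exact if_neg fun h => hb (Subtype.ext h.symm)
    · simp
    · intro b _ hb
      exact if_neg fun h => hb (Subtype.ext h.symm)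
    · simp
  have hninj : ¬ Function.Injective L := by
    intro hinj
    have hle := LinearMap.finrank_le_finrank_of_injective hinj
    have heq : Module.finrank ℝ (S → ℝ) = Module.finrank ℝ (W → ℝ) := by
      apply le_antisymm hle
      simpa using hcard
    have hsurj := (LinearMap.injective_iff_surjective_of_finrank_eq_finrank heq).1 hinj
    obtain ⟨d, hd⟩ := hsurj (Pi.single ⟨src a₁, hsW a₁ ((memS a₁).2 ha₁)⟩ 1)
    have := hLsum d
    rw [hd] at this
    simp at this
  rw [← LinearMap.ker_eq_bot, Submodule.eq_bot_iff] at hninj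
  push Not at hninj
  obtain ⟨d, hd, hd0⟩ := hninj
  have hd : L d = 0 := hd
  obtain ⟨a₂, ha₂⟩ := Function.ne_iff.1 hd0
  refine ⟨fun a => if h : a ∈ S then d ⟨a, h⟩ else 0, fun v => ?_, fun a ha => ?_, a₂, ?_⟩
  · rw [Finset.sum_filter, Finset.sum_filter, ← sub_eq_zero, ← Finset.sum_sub_distrib,
      ← Finset.sum_subset (Finset.subset_univ S), ← Finset.sum_coe_sort S]
    · by_cases hv : v ∈ W
      · have := congrFun hd ⟨v, hv⟩
        change ∑ a : S, _ = (0 : ℝ) at this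
        refine Eq.trans ?_ this
        refine Finset.sum_congr rfl fun a _ => ?_
        simp
      · refine Finset.sum_eq_zero fun a _ => ?_
        have h1 : src a ≠ v := fun h => hv (h ▸ hsW a a.2)
        have h2 : tgt a ≠ v := fun h => hv (h ▸ htW a a.2)
        simp [h1, h2]
    · intro a _ ha
      simp [ha]
  · exact dif_neg fun h => (memS a).1 h ha
  · simpa using ha₂

/-- A real circulation can be rounded to an integral one without decreasing the linear
functional `φ`. -/
lemma exists_round {V A : Type*} [Fintype A] [DecidableEq V] (src tgt : A → V)
    (φ : (A → ℝ) →ₗ[ℝ] ℝ) (x : A → ℝ) (hx : Circ src tgt x) :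
    ∃ y : A → ℤ, (∀ a, ⌊x a⌋ ≤ y a ∧ y a ≤ ⌈x a⌉) ∧ Circ src tgt (fun a => (y a : ℝ)) ∧
      φ x ≤ φ (fun a => (y a : ℝ)) := by
  classical
  induction hn : (univ.filter (fun a => x a ∉ intSub)).card using Nat.strong_induction_on
    generalizing x with
  | _ n ih =>
  by_cases hall : ∀ a, x a ∈ intSub
  · choose y hy using fun a => mem_intSub.1 (hall a)
    obtain rfl : (fun a => (y a : ℝ)) = x := funext hy
    exact ⟨y, fun a => by simp, hx, le_rfl⟩
  push Not at hall
  obtain ⟨a₁, ha₁⟩ := hall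
  obtain ⟨d, hdc, hds, hd0, hφ⟩ : ∃ d : A → ℝ, Circ src tgt d ∧ (∀ a, x a ∈ intSub → d a = 0) ∧
      (∃ a, d a ≠ 0) ∧ 0 ≤ φ d := by
    obtain ⟨d, h1, h2, a, h3⟩ := exists_circ_support src tgt x hx a₁ ha₁
    rcases le_total 0 (φ d) with h | h
    · exact ⟨d, h1, h2, ⟨a, h3⟩, h⟩
    · refine ⟨-d, fun v => ?_, fun a ha => by simp [h2 a ha], ⟨a, by simpa using h3⟩, by simpa using h⟩
      simpa using h1 v
  -- `ε a` is the step length at which arc `a` reaches the end of its rounding interval.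
  let ε : A → ℝ := fun a => (if 0 < d a then ⌈x a⌉ - x a else ⌊x a⌋ - x a) / d a
  have hεpos : ∀ a, d a ≠ 0 → 0 < ε a := by
    intro a ha
    have hni : x a ∉ intSub := fun h => ha (hds a h)
    have h1 : (⌊x a⌋ : ℝ) < x a :=
      lt_of_le_of_ne (Int.floor_le _) fun h => hni (mem_intSub.2 ⟨_, h⟩)
    have h2 : x a < (⌈x a⌉ : ℝ) :=
      lt_of_le_of_ne (Int.le_ceil _) fun h => hni (mem_intSub.2 ⟨_, h.symm⟩)
    simp only [ε]
    split_ifs with h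
    · exact div_pos (by linarith) h
    · exact div_pos_of_neg_of_neg (by linarith) (lt_of_le_of_ne (not_lt.1 h) ha)
  obtain ⟨a₂, ha₂, hmin⟩ := Finset.exists_min_image (univ.filter (fun a => d a ≠ 0)) ε
    (by obtain ⟨a, ha⟩ := hd0; exact ⟨a, by simpa using ha⟩)
  simp only [mem_filter, mem_univ, true_and] at ha₂ hmin
  have hbd : ∀ a, (⌊x a⌋ : ℝ) ≤ x a + ε a₂ * d a ∧ x a + ε a₂ * d a ≤ (⌈x a⌉ : ℝ) := by
    intro a
    have h1 := Int.floor_le (x a)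
    have h2 := Int.le_ceil (x a)
    have h3 := hεpos a₂ ha₂
    by_cases h0 : d a = 0
    · simp [h0, h1, h2]
    have h4 := hmin a h0
    simp only [ε] at h4 h3
    rcases lt_or_gt_of_ne h0 with h | h
    · rw [if_neg (not_lt.2 h.le), le_div_iff_of_neg h] at h4
      exact ⟨by simp only [ε]; linarith, by simp only [ε]; nlinarith⟩
    · rw [if_pos h, le_div_iff₀ h] at h4
      exact ⟨by simp only [ε]; nlinarith, by simp only [ε]; linarith⟩
  have hint : x a₂ + ε a₂ * d a₂ ∈ intSub := by
    simp only [ε]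
    rw [div_mul_cancel₀ _ ha₂]
    split_ifs
    · exact mem_intSub.2 ⟨⌈x a₂⌉, by ring⟩
    · exact mem_intSub.2 ⟨⌊x a₂⌋, by ring⟩
  have hcirc : Circ src tgt (x + ε a₂ • d) := by
    intro v
    simp only [Pi.add_apply, Pi.smul_apply, smul_eq_mul, Finset.sum_add_distrib, ← Finset.mul_sum]
    rw [hx v, hdc v]
  have hlt : (univ.filter (fun a => (x + ε a₂ • d) a ∉ intSub)).card < n := by
    rw [← hn]
    apply Finset.card_lt_card
    rw [Finset.ssubset_iff_of_subset]
    · refine ⟨a₂, ?_, ?_⟩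
      · simpa using fun h => ha₂ (hds a₂ h)
      · simpa using hint
    · intro a ha
      simp only [mem_filter, mem_univ, true_and] at ha ⊢
      intro h
      apply ha
      simpa [hds a h] using h
  obtain ⟨y, hy1, hy2, hy3⟩ := ih _ hlt (x + ε a₂ • d) hcirc rfl
  refine ⟨y, fun a => ⟨?_, ?_⟩, hy2, le_trans ?_ hy3⟩
  · exact (Int.le_floor.2 (hbd a).1).trans (hy1 a).1
  · exact (hy1 a).2.trans (Int.ceil_le.2 (hbd a).2)
  · rw [map_add, map_smul, smul_eq_mul]
    have := mul_nonneg (hεpos a₂ ha₂).le hφ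
    linarith

/-! ### Decomposition into 0/1 circulations -/

/-- An integral circulation with values in `[0, k]` is a sum of `k` circulations with values
in `{0, 1}`. -/
lemma exists_decomp {V A : Type*} [Fintype A] [DecidableEq V] (src tgt : A → V) (k : ℕ)
    (y : A → ℤ) (h0 : ∀ a, 0 ≤ y a) (hk : ∀ a, y a ≤ k) (hy : Circ src tgt (fun a => (y a : ℝ))) :
    ∃ w : ℕ → A → ℤ, (∀ i ∈ Finset.Icc 1 k, (∀ a, 0 ≤ w i a ∧ w i a ≤ 1) ∧
      Circ src tgt (fun a => (w i a : ℝ))) ∧ ∀ a, ∑ i ∈ Finset.Icc 1 k, w i a = y a := by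
  induction k generalizing y with
  | zero =>
    refine ⟨fun _ _ => 0, by simp, fun a => ?_⟩
    have := h0 a
    have := hk a
    simp at *
    omega
  | succ k ih =>
    have hkp : (0 : ℝ) < (k : ℝ) + 1 := by positivity
    obtain ⟨r, hr, hrc, -⟩ := exists_round src tgt 0 (fun a => (y a : ℝ) / ((k : ℝ) + 1)) (by
      intro v
      simp only [← Finset.sum_div]
      rw [hy v])
    have hr0 : ∀ a, 0 ≤ r a := fun a =>
      le_trans (Int.floor_nonneg.2 (div_nonneg (by exact_mod_cast h0 a) hkp.le)) (hr a).1
    have hr1 : ∀ a, r a ≤ 1 := fun a => by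
      refine (hr a).2.trans (Int.ceil_le.2 ?_)
      rw [div_le_iff₀ hkp]
      have : (y a : ℝ) ≤ ((k + 1 : ℕ) : ℤ) := by exact_mod_cast hk a
      push_cast at this ⊢
      linarith
    -- The extreme values `0` and `k + 1` are rounded to `0` and `1` respectively.
    have hz : ∀ a, y a = 0 → r a = 0 := fun a ha => by
      have := hr a
      simp [ha] at this
      omega
    have ht : ∀ a, y a = k + 1 → r a = 1 := fun a ha => by
      have h := (hr a).1
      have e : (y a : ℝ) / ((k : ℝ) + 1) = 1 := by
        rw [ha]
        push_cast
        exact div_self hkp.ne'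
      simp only [e, Int.floor_one] at h
      have := hr1 a
      omega
    obtain ⟨w, hw, hws⟩ := ih (fun a => y a - r a)
      (fun a => by
        have := h0 a; have := hr1 a; have := hz a
        omega)
      (fun a => by
        have := hk a; have := hr0 a; have := ht a
        push_cast at *
        omega)
      (by
        intro v
        push_cast
        simp only [Finset.sum_sub_distrib]
        rw [hy v, hrc v])
    refine ⟨fun i => if i = k + 1 then r else w i, fun i hi => ?_, fun a => ?_⟩
    · by_cases h : i = k + 1
      · simp only [h, if_true]
        exact ⟨fun a => ⟨hr0 a, hr1 a⟩, hrc⟩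
      · simp only [h, if_false]
        refine hw i ?_
        simp only [Finset.mem_Icc] at hi ⊢
        omega
    · rw [Finset.sum_Icc_succ_top (by omega)]
      have : ∑ i ∈ Finset.Icc 1 k, (if i = k + 1 then r else w i) a =
          ∑ i ∈ Finset.Icc 1 k, w i a := by
        refine Finset.sum_congr rfl fun i hi => ?_
        rw [if_neg]
        simp only [Finset.mem_Icc] at hi
        omega
      rw [this, hws]
      simp

/-! ### Flows as circulations -/

/-- Conservation at all nodes other than `s` and `t` amounts to being a circulation in the network
in which `t` is identified with `s`; the balance at the merged node is automatic. -/
lemma circ_merge_iff {V A : Type*} [Fintype V] [Fintype A] [DecidableEq V] (src tgt : A → V)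
    (s t : V) (hst : s ≠ t) (x : A → ℝ) :
    Circ (fun a => if src a = t then s else src a) (fun a => if tgt a = t then s else tgt a) x ↔
    ∀ v, v ≠ s → v ≠ t → ∑ a ∈ univ.filter (fun a => tgt a = v), x a =
      ∑ a ∈ univ.filter (fun a => src a = v), x a := by
  have key : ∀ (f : A → V) (v : V), v ≠ s → v ≠ t →
      univ.filter (fun a => (if f a = t then s else f a) = v) =
        univ.filter (fun a => f a = v) := by
    intro f v h1 h2
    refine Finset.filter_congr fun a _ => ?_
    grind
  have key' : ∀ (f : A → V), univ.filter (fun a => (if f a = t then s else f a) = t) = ∅ := by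
    intro f
    refine Finset.filter_eq_empty_iff.2 fun a _ => ?_
    grind
  constructor
  · intro h v h1 h2
    simpa only [key _ v h1 h2] using h v
  · intro h
    have hne : ∀ v, v ≠ s →
        ∑ a ∈ univ.filter (fun a => (if tgt a = t then s else tgt a) = v), x a =
          ∑ a ∈ univ.filter (fun a => (if src a = t then s else src a) = v), x a := by
      intro v hv
      by_cases hvt : v = t
      · subst hvt
        rw [key', key']
      · simpa only [key _ v hv hvt] using h v hv hvt
    intro v
    by_cases hv : v = s
    · subst hv
      have e1 := Finset.sum_fiberwise univ (fun a => if tgt a = t then v else tgt a) x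
      have e2 := Finset.sum_fiberwise univ (fun a => if src a = t then v else src a) x
      rw [← Finset.add_sum_erase _ _ (mem_univ v)] at e1 e2
      have e3 := Finset.sum_congr (rfl : univ.erase v = univ.erase v)
        fun w hw => hne w (Finset.ne_of_mem_erase hw)
      linarith
    · exact hne v hv

/-- `flowValue` as a linear functional. -/
noncomputable def flowValueLin {V A : Type*} [Fintype A] [DecidableEq V]
    (src tgt : A → V) (s : V) : (A → ℝ) →ₗ[ℝ] ℝ where
  toFun := flowValue src tgt s
  map_add' x y := by
    simp only [flowValue, Pi.add_apply, Finset.sum_add_distrib]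
    ring
  map_smul' c x := by
    simp only [flowValue, Pi.smul_apply, smul_eq_mul, ← Finset.mul_sum, RingHom.id_apply]
    ring

lemma flowValue_sum {V A : Type*} [Fintype A] [DecidableEq V]
    (src tgt : A → V) (s : V) (I : Finset ℕ) (x : ℕ → A → ℝ) :
    flowValue src tgt s (fun a => ∑ i ∈ I, x i a) = ∑ i ∈ I, flowValue src tgt s (x i) := by
  have := map_sum (flowValueLin src tgt s) x I
  rw [show (fun a => ∑ i ∈ I, x i a) = ∑ i ∈ I, x i by ext a; simp]
  exact this

/-! ### Equality of the two maxima -/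

/-- Generalization to several unit-time jobs per arc: in a network in which every arc has
capacity 1, where arc `a` must be shut down in `m a` distinct periods of `{1,…,T}`, the
maximum throughput over all multi-job schedules equals the maximum of the aggregated flow
problem with bounds `0 ≤ X_a ≤ T − m_a`. -/
theorem unitCapacity_multiJob_maxThroughput_eq_aggregated
    {V A : Type*} [Fintype V] [Fintype A] [DecidableEq V]
    (src tgt : A → V) (s t : V) (u : A → ℝ)
    (hst : s ≠ t) (hu : ∀ a, u a = 1)
    (T : ℕ) (hT : 1 ≤ T)
    (m : A → ℕ) (hm : ∀ a, m a ≤ T)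
    (F : Set A → ℝ)
    (hF : ∀ K : Set A, IsGreatest (flowValues src tgt s t u K) (F K))
    (z₁ z₂ : ℝ)
    (h₁ : IsGreatest
      {z | ∃ D : A → Finset ℕ,
        (∀ a, D a ⊆ Finset.Icc 1 T) ∧ (∀ a, (D a).card = m a) ∧
        z = ∑ i ∈ Finset.Icc 1 T, F {a | i ∈ D a}} z₁)
    (h₂ : IsGreatest
      {z | ∃ X : A → ℝ,
        (∀ v, v ≠ s → v ≠ t →
          ∑ a ∈ univ.filter (fun a => tgt a = v), X a =
            ∑ a ∈ univ.filter (fun a => src a = v), X a) ∧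
        (∀ a, 0 ≤ X a) ∧
        (∀ a, X a ≤ (T : ℝ) - (m a : ℝ)) ∧
        z = flowValue src tgt s X} z₂) :
    z₁ = z₂ := by
  classical
  obtain ⟨⟨D, hD1, hD2, hz1⟩, hub1⟩ := h₁
  obtain ⟨⟨X, hX1, hX2, hX3, hz2⟩, hub2⟩ := h₂
  apply le_antisymm
  · choose x hx hxF using fun i => (hF {a | i ∈ D a}).1
    refine hub2 ⟨fun a => ∑ i ∈ Finset.Icc 1 T, x i a, fun v h1 h2 => ?_, fun a => ?_,
      fun a => ?_, ?_⟩
    · rw [Finset.sum_comm, Finset.sum_comm (s := univ.filter (fun a => src a = v))]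
      exact Finset.sum_congr rfl fun i _ => (hx i).2.2 v h1 h2
    · exact Finset.sum_nonneg fun i _ => ((hx i).1 a).1
    · calc ∑ i ∈ Finset.Icc 1 T, x i a
          ≤ ∑ i ∈ Finset.Icc 1 T, ((1 : ℝ) - if i ∈ D a then 1 else 0) := by
            refine Finset.sum_le_sum fun i _ => ?_
            split_ifs with h
            · rw [(hx i).2.1 a h]
              norm_num
            · have := ((hx i).1 a).2
              rw [hu] at this
              linarith
        _ = (T : ℝ) - m a := by
            rw [Finset.sum_sub_distrib, Finset.sum_ite_mem, Finset.inter_eq_right.2 (hD1 a)]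
            simp [hD2]
    · rw [flowValue_sum, hz1]
      exact Finset.sum_congr rfl fun i _ => hxF i
  · obtain ⟨Y, hY, hYc, hYv⟩ := exists_round _ _ (flowValueLin src tgt s) X
      ((circ_merge_iff src tgt s t hst X).2 hX1)
    have hY0 : ∀ a, 0 ≤ Y a := fun a => (Int.floor_nonneg.2 (hX2 a)).trans (hY a).1
    have hYT : ∀ a, Y a ≤ T - m a := fun a =>
      (hY a).2.trans (Int.ceil_le.2 (by push_cast; exact hX3 a))
    obtain ⟨w, hw, hws⟩ := exists_decomp _ _ T Y hY0 (fun a => by have := hYT a; omega) hYc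
    have hcard : ∀ a, m a ≤ ((Finset.Icc 1 T).filter (fun i => w i a = 0)).card := by
      intro a
      have e : (((Finset.Icc 1 T).filter (fun i => w i a = 0)).card : ℤ) = T - Y a := by
        rw [← hws a, Finset.card_filter]
        push_cast
        rw [eq_sub_iff_add_eq, ← Finset.sum_add_distrib]
        trans ∑ i ∈ Finset.Icc 1 T, (1 : ℤ)
        · refine Finset.sum_congr rfl fun i hi => ?_
          have := (hw i hi).1 a
          split_ifs <;> omega
        · simp
      have := hYT a
      omega
    choose E hE1 hE2 using fun a => Finset.exists_subset_card_eq (hcard a)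
    have hle : ∑ i ∈ Finset.Icc 1 T, F {a | i ∈ E a} ≤ z₁ :=
      hub1 ⟨E, fun a => (hE1 a).trans (Finset.filter_subset _ _), hE2, rfl⟩
    refine le_trans ?_ hle
    have hYsum : (fun a => (Y a : ℝ)) = fun a => ∑ i ∈ Finset.Icc 1 T, (w i a : ℝ) := by
      ext a
      rw [← hws a]
      push_cast
      rfl
    change flowValue src tgt s X ≤ flowValue src tgt s _ at hYv
    rw [hYsum, flowValue_sum src tgt s (Finset.Icc 1 T) (fun i a => (w i a : ℝ))] at hYv
    rw [hz2]
    refine hYv.trans (Finset.sum_le_sum fun i hi => (hF _).2 ⟨_, ⟨fun a => ?_, fun a ha => ?_, ?_⟩, rfl⟩)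
    · have := (hw i hi).1 a
      rw [hu]
      exact_mod_cast this
    · have := (Finset.mem_filter.1 (hE1 a ha)).2
      simp [this]
    · exact (circ_merge_iff src tgt s t hst _).1 (hw i hi).2
end

section
/- Let N=(V,A,s,t,u) be a network, J ⊆ A a job set, and T ≥ 1 a time horizon. Suppose N has a single transhipment node and is balanced, i.e. C1⁻ = C1⁺. Then it is optimal to schedule all jobs at the same time: the maximum throughput over all schedules equals min{C2⁻, C2⁺} + (T−1)·C1⁻, attained by assigning every job in J to period 1. -/
/-!
Write `C K w` for the total capacity of the arcs outside `K` leaving `w` (`remainingCap`). With a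
single transhipment node every arc leaves either `s` or `v`, and the maximum flow with the arcs of
`K` removed is the smaller of the two remaining capacities, `min (C K s) (C K v)`
(`maxFlow_eq`): both are cuts, and scaling the capacities on the two sides down to the minimum
gives a flow of that value.

Summing the bound `F K ≤ C K w` over the periods, every job arc is lost exactly once, so for
`w = s, v` the throughput of any schedule is at most `(T - 1) * C ∅ w + C J w`
(`sum_remainingCap`). In a balanced network `C ∅ s = C ∅ v`, so the throughput is at most
`(T - 1) * C ∅ s + min (C J s) (C J v)`. Putting all jobs in period 1 gives exactly this, since
`F J = min (C J s) (C J v)` and `F ∅ = C ∅ s`.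
-/

open Finset

open Classical in
/-- The total capacity `C K w` of the arcs leaving `w` that remain when the arcs of `K` are
removed. -/
noncomputable def remainingCap {V A : Type*} [Fintype A] [DecidableEq V]
    (src : A → V) (u : A → ℝ) (K : Set A) (w : V) : ℝ :=
  ∑ a ∈ univ.filter (fun a => src a = w), if a ∈ K then 0 else u a

lemma remainingCap_nonneg {V A : Type*} [Fintype A] [DecidableEq V]
    (src : A → V) (u : A → ℝ) (hu : ∀ a, 0 ≤ u a) (K : Set A) (w : V) :
    0 ≤ remainingCap src u K w := by
  unfold remainingCap
  refine Finset.sum_nonneg fun a _ => ?_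
  split_ifs
  exacts [le_rfl, hu a]

/-- Scaling the remaining capacities at `w` by `m / C K w` produces total outflow `m`, also in the
degenerate case `C K w = 0`, where `m = 0`. -/
lemma div_mul_remainingCap {V A : Type*} [Fintype A] [DecidableEq V]
    (src : A → V) (u : A → ℝ) (K : Set A) (w : V)
    (m : ℝ) (hm : 0 ≤ m) (hmw : m ≤ remainingCap src u K w) :
    m / remainingCap src u K w * remainingCap src u K w = m := by
  rcases eq_or_ne (remainingCap src u K w) 0 with h | h
  · rw [h] at hmw ⊢
    simp [le_antisymm hmw hm]
  · exact div_mul_cancel₀ m h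

/-- In a single-transhipment-node network a feasible flow is a choice of arc flows within the
capacities with equal totals on the two sides of `v`, and its value is this common total. -/
lemma mem_flowValues_iff {V A : Type*} [Fintype V] [Fintype A] [DecidableEq V]
    (src tgt : A → V) (s t v : V) (u : A → ℝ)
    (hst : s ≠ t) (hvs : v ≠ s) (hvt : v ≠ t)
    (hV : ∀ w : V, w = s ∨ w = v ∨ w = t)
    (harc : ∀ a, (src a = s ∧ tgt a = v) ∨ (src a = v ∧ tgt a = t))
    (K : Set A) (z : ℝ) :
    z ∈ flowValues src tgt s t u K ↔ ∃ x : A → ℝ, (∀ a, 0 ≤ x a ∧ x a ≤ u a) ∧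
      (∀ a ∈ K, x a = 0) ∧ z = ∑ a ∈ univ.filter (fun a => src a = s), x a ∧
      z = ∑ a ∈ univ.filter (fun a => src a = v), x a := by
  have h1 : univ.filter (fun a => tgt a = v) = univ.filter (fun a => src a = s) := by
    ext a
    rcases harc a with ⟨h, h'⟩ | ⟨h, h'⟩ <;> simp [h, h', hvs, hvt.symm]
  have h2 : univ.filter (fun a => tgt a = s) = ∅ := by
    ext a
    rcases harc a with ⟨h, h'⟩ | ⟨h, h'⟩ <;> simp [h', hvs, hst.symm]
  simp only [flowValues, IsFlow, flowValue, h2, Finset.sum_empty, sub_zero, Set.mem_ofPred_eq]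
  constructor
  · rintro ⟨x, ⟨hb, hK, hc⟩, rfl⟩
    refine ⟨x, hb, hK, rfl, ?_⟩
    rw [← hc v hvs hvt, h1]
  · rintro ⟨x, hb, hK, hs, hv⟩
    refine ⟨x, ⟨hb, hK, fun w hws hwt => ?_⟩, hs⟩
    obtain rfl : w = v := by
      rcases hV w with h | h | h
      exacts [absurd h hws, h, absurd h hwt]
    rw [h1, ← hs, ← hv]

/-- The maximum flow is the minimum of the two remaining capacities. -/
lemma maxFlow_eq {V A : Type*} [Fintype V] [Fintype A] [DecidableEq V]
    (src tgt : A → V) (s t v : V) (u : A → ℝ)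
    (hst : s ≠ t) (hvs : v ≠ s) (hvt : v ≠ t)
    (hV : ∀ w : V, w = s ∨ w = v ∨ w = t)
    (harc : ∀ a, (src a = s ∧ tgt a = v) ∨ (src a = v ∧ tgt a = t))
    (hu : ∀ a, 0 ≤ u a) (K : Set A) (f : ℝ)
    (hf : IsGreatest (flowValues src tgt s t u K) f) :
    f = min (remainingCap src u K s) (remainingCap src u K v) := by
  classical
  refine hf.unique ⟨?_, ?_⟩
  · rw [mem_flowValues_iff src tgt s t v u hst hvs hvt hV harc]
    set m := min (remainingCap src u K s) (remainingCap src u K v) with hm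
    have hm0 : 0 ≤ m :=
      le_min (remainingCap_nonneg src u hu K s) (remainingCap_nonneg src u hu K v)
    have hle : ∀ a, m ≤ remainingCap src u K (src a) := by
      intro a
      rcases harc a with ⟨h, -⟩ | ⟨h, -⟩ <;> rw [h]
      exacts [min_le_left _ _, min_le_right _ _]
    have hsum : ∀ w, m ≤ remainingCap src u K w →
        m = ∑ a ∈ univ.filter (fun a => src a = w),
          m / remainingCap src u K (src a) * (if a ∈ K then 0 else u a) := by
      intro w hw
      have : ∑ a ∈ univ.filter (fun a => src a = w),
          m / remainingCap src u K (src a) * (if a ∈ K then 0 else u a) =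
          m / remainingCap src u K w * remainingCap src u K w := by
        conv_rhs => rw [remainingCap, Finset.mul_sum]
        refine Finset.sum_congr rfl fun a ha => ?_
        rw [(Finset.mem_filter.1 ha).2]
        rfl
      rw [this, div_mul_remainingCap src u K w m hm0 hw]
    refine ⟨fun a => m / remainingCap src u K (src a) * (if a ∈ K then 0 else u a),
      fun a => ?_, fun a ha => by simp [ha], hsum s (min_le_left _ _), hsum v (min_le_right _ _)⟩
    have hq0 : 0 ≤ m / remainingCap src u K (src a) :=
      div_nonneg hm0 (remainingCap_nonneg src u hu K _)
    have hq1 : m / remainingCap src u K (src a) ≤ 1 :=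
      div_le_one_of_le₀ (hle a) (remainingCap_nonneg src u hu K _)
    dsimp only
    split_ifs
    · simp [hu a]
    · exact ⟨mul_nonneg hq0 (hu a), mul_le_of_le_one_left (hu a) hq1⟩
  · intro z hz
    rw [mem_flowValues_iff src tgt s t v u hst hvs hvt hV harc] at hz
    obtain ⟨x, hb, hK, hs, hv⟩ := hz
    have key : ∀ w, ∑ a ∈ univ.filter (fun a => src a = w), x a ≤ remainingCap src u K w := by
      intro w
      unfold remainingCap
      refine Finset.sum_le_sum fun a _ => ?_
      split_ifs with h
      exacts [(hK a h).le, (hb a).2]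
    exact le_min (hs.le.trans (key s)) (hv.le.trans (key v))

/-- Each job arc is unavailable in exactly one period, so the remaining capacities at `w` sum up
over time to the same total for every schedule. -/
lemma sum_remainingCap {V A : Type*} [Fintype A] [DecidableEq V]
    (src : A → V) (u : A → ℝ) (J : Set A) (T : ℕ) (σ : A → ℕ)
    (hσ : ∀ a ∈ J, σ a ∈ Finset.Icc 1 T) (w : V) :
    ∑ i ∈ Finset.Icc 1 T, remainingCap src u {a | a ∈ J ∧ σ a = i} w =
      remainingCap src u J w + ((T : ℝ) - 1) * remainingCap src u ∅ w := by
  classical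
  unfold remainingCap
  rw [Finset.sum_comm, Finset.mul_sum, ← Finset.sum_add_distrib]
  refine Finset.sum_congr rfl fun a _ => ?_
  by_cases ha : a ∈ J
  · refine (Finset.sum_congr rfl (g := fun i => u a - if σ a = i then u a else 0)
      fun i _ => ?_).trans ?_
    · by_cases hi : σ a = i <;> simp [ha, hi]
    · rw [Finset.sum_sub_distrib, Finset.sum_ite_eq, if_pos (hσ a ha), if_pos ha]
      simp
      ring
  · simp [ha]
    ring

/-- For a balanced single-transhipment-node network (`C1⁻ = C1⁺`) it is optimal to schedule
all jobs at the same time: the maximum throughput over all schedules equals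
`min{C2⁻, C2⁺} + (T−1)·C1⁻`, attained by assigning every job to period 1. -/
theorem allJobsAtTimeOne_optimal_balanced_singleNode
    {V A : Type*} [Fintype V] [Fintype A] [DecidableEq V] [DecidableEq A]
    (src tgt : A → V) (s t v : V) (u : A → ℝ)
    (hst : s ≠ t) (hvs : v ≠ s) (hvt : v ≠ t)
    (hV : ∀ w : V, w = s ∨ w = v ∨ w = t)
    (harc : ∀ a, (src a = s ∧ tgt a = v) ∨ (src a = v ∧ tgt a = t))
    (hu : ∀ a, 0 ≤ u a)
    (J : Finset A) (T : ℕ) (hT : 1 ≤ T)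
    (F : Set A → ℝ)
    (hF : ∀ K : Set A, IsGreatest (flowValues src tgt s t u K) (F K))
    (hbal : (∑ a ∈ univ.filter (fun a => src a = s ∧ tgt a = v), u a) =
        (∑ a ∈ univ.filter (fun a => src a = v ∧ tgt a = t), u a)) :
    IsGreatest
      {z | ∃ σ : A → ℕ, (∀ a ∈ J, σ a ∈ Finset.Icc 1 T) ∧ z = throughput F (↑J) T σ}
      (min (∑ a ∈ univ.filter (fun a => src a = s ∧ tgt a = v ∧ a ∉ J), u a)
          (∑ a ∈ univ.filter (fun a => src a = v ∧ tgt a = t ∧ a ∉ J), u a) +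
        ((T : ℝ) - 1) * ∑ a ∈ univ.filter (fun a => src a = s ∧ tgt a = v), u a) ∧
    throughput F (↑J) T (fun _ => 1) =
      min (∑ a ∈ univ.filter (fun a => src a = s ∧ tgt a = v ∧ a ∉ J), u a)
          (∑ a ∈ univ.filter (fun a => src a = v ∧ tgt a = t ∧ a ∉ J), u a) +
        ((T : ℝ) - 1) * ∑ a ∈ univ.filter (fun a => src a = s ∧ tgt a = v), u a := by
  classical
  have hmax : ∀ K, F K = min (remainingCap src u K s) (remainingCap src u K v) := fun K =>
    maxFlow_eq src tgt s t v u hst hvs hvt hV harc hu K (F K) (hF K)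
  have e1 : ∑ a ∈ univ.filter (fun a => src a = s ∧ tgt a = v), u a = remainingCap src u ∅ s := by
    simp only [remainingCap, Finset.sum_filter]
    refine Finset.sum_congr rfl fun a _ => ?_
    rcases harc a with ⟨h, h'⟩ | ⟨h, h'⟩ <;> simp [h, h', hvs]
  have e2 : ∑ a ∈ univ.filter (fun a => src a = v ∧ tgt a = t), u a = remainingCap src u ∅ v := by
    simp only [remainingCap, Finset.sum_filter]
    refine Finset.sum_congr rfl fun a _ => ?_
    rcases harc a with ⟨h, h'⟩ | ⟨h, h'⟩ <;> simp [h, h', hvs.symm]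
  have e3 : ∑ a ∈ univ.filter (fun a => src a = s ∧ tgt a = v ∧ a ∉ J), u a =
      remainingCap src u (↑J) s := by
    simp only [remainingCap, Finset.sum_filter]
    refine Finset.sum_congr rfl fun a _ => ?_
    rcases harc a with ⟨h, h'⟩ | ⟨h, h'⟩ <;> by_cases ha : a ∈ J <;> simp [h, h', hvs, ha]
  have e4 : ∑ a ∈ univ.filter (fun a => src a = v ∧ tgt a = t ∧ a ∉ J), u a =
      remainingCap src u (↑J) v := by
    simp only [remainingCap, Finset.sum_filter]
    refine Finset.sum_congr rfl fun a _ => ?_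
    rcases harc a with ⟨h, h'⟩ | ⟨h, h'⟩ <;> by_cases ha : a ∈ J <;> simp [h, h', hvs.symm, ha]
  rw [e1, e2] at hbal
  rw [e1, e3, e4]
  have hone : throughput F (↑J) T (fun _ => 1) =
      min (remainingCap src u (↑J) s) (remainingCap src u (↑J) v) +
        ((T : ℝ) - 1) * remainingCap src u ∅ s := by
    unfold throughput
    rw [← Finset.add_sum_Ioc_eq_sum_Icc hT]
    have hrest : ∀ i ∈ Finset.Ioc 1 T, F {a | a ∈ (↑J : Set A) ∧ 1 = i} =
        remainingCap src u ∅ s := by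
      intro i hi
      have hset : {a | a ∈ (↑J : Set A) ∧ 1 = i} = ∅ := by
        ext a
        simp [(Finset.mem_Ioc.1 hi).1.ne]
      rw [hset, hmax, ← hbal, min_self]
    have hfirst : {a | a ∈ (↑J : Set A) ∧ 1 = 1} = (↑J : Set A) := by
      ext a
      simp
    rw [Finset.sum_congr rfl hrest, hfirst, hmax]
    simp [Nat.cast_sub hT]
  refine ⟨⟨⟨fun _ => 1, fun a _ => by simp [hT], hone.symm⟩, ?_⟩, hone⟩
  rintro z ⟨σ, hσ, rfl⟩
  have hs : throughput F (↑J) T σ ≤ _ :=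
    (Finset.sum_le_sum fun i _ => (hmax _).le.trans (min_le_left _ _)).trans_eq
      (sum_remainingCap src u (↑J) T σ hσ s)
  have hv : throughput F (↑J) T σ ≤ _ :=
    (Finset.sum_le_sum fun i _ => (hmax _).le.trans (min_le_right _ _)).trans_eq
      (sum_remainingCap src u (↑J) T σ hσ v)
  rw [← hbal] at hv
  rw [← min_add_add_right]
  exact le_min hs hv
end
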